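/- arXiv:2101.08080 — 5 statements merged into one kernel-verified Lean document; each statement's English description precedes it below -/
import Mathlib

section
/- Assume G ∈ C²(Ω × Y × ℝ) satisfies (Reg), (Mono), (Twist), (Gen_Ω) and (Gen_∂X), that X ⊆ Ω is compact, that ρ is a continuous probability density supported in X, and that int(X) ∩ {ρ > 0} is path-connected. Let ν ∈ ℝ^N with Σᵢ νᵢ = 1, and let ψ ∈ ℝ^N satisfy Hᵢ(ψ) > 0 for every i. Then the system { DH(ψ)u = H(ψ) − ν , u₁ = 0 } has a unique solution u ∈ ℝ^N. -/
set_option autoImplicit false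

open MeasureTheory Set

noncomputable section

variable {d N : ℕ}

/-- Generalized Laguerre cell associated to `ψ` and index `i`. -/
def Lag (Ω : Set (EuclideanSpace ℝ (Fin d))) (G : EuclideanSpace ℝ (Fin d) → Fin N → ℝ → ℝ)
    (ψ : Fin N → ℝ) (i : Fin N) : Set (EuclideanSpace ℝ (Fin d)) :=
  {x ∈ Ω | ∀ j, G x j (ψ j) ≤ G x i (ψ i)}

/-- Interface `Γᵢⱼ(ψ)` between two cells. -/
def Gam (Ω : Set (EuclideanSpace ℝ (Fin d))) (G : EuclideanSpace ℝ (Fin d) → Fin N → ℝ → ℝ)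
    (ψ : Fin N → ℝ) (i j : Fin N) : Set (EuclideanSpace ℝ (Fin d)) :=
  {x ∈ Ω | G x i (ψ i) = G x j (ψ j)}

/-- The mass function `H(ψ) = (μ(Lagᵢ(ψ)))ᵢ` where `μ` has density `ρ`. -/
def Hfun (Ω : Set (EuclideanSpace ℝ (Fin d))) (G : EuclideanSpace ℝ (Fin d) → Fin N → ℝ → ℝ)
    (ρ : EuclideanSpace ℝ (Fin d) → ℝ) (ψ : Fin N → ℝ) : Fin N → ℝ :=
  fun i => ((volume.withDensity fun x => ENNReal.ofReal (ρ x)) (Lag Ω G ψ i)).toReal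


open Filter Topology

lemma loc_diff {α P : Type*} [TopologicalSpace α] [T2Space α] [LocallyCompactSpace α]
    [MeasurableSpace α] [BorelSpace α] (μ : Measure α) [IsFiniteMeasureOnCompacts μ]
    [NormedAddCommGroup P] [NormedSpace ℝ P] (A : P → Set α) (ψ0 : P) (g : α → ℝ)
    (hg : Continuous g) (hc : HasCompactSupport g)
    (h : ∀ x ∈ tsupport g, ∃ V ∈ 𝓝 x, ∀ g' : α → ℝ, Continuous g' → HasCompactSupport g' →
      tsupport g' ⊆ V → DifferentiableAt ℝ (fun ψ => ∫ x in A ψ, g' x ∂μ) ψ0) :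
    DifferentiableAt ℝ (fun ψ => ∫ x in A ψ, g x ∂μ) ψ0 := by
  choose! V hV hd using h
  obtain ⟨t, ht, hcov⟩ := hc.elim_nhds_subcover (fun x => interior (V x))
    (fun x hx => interior_mem_nhds.2 (hV x hx))
  let eqv := t.equivFin
  obtain ⟨χ, h1, h2, h3, h4⟩ := exists_continuous_sum_one_of_isOpen_isCompact
    (s := fun k : Fin t.card => interior (V (eqv.symm k))) (t := tsupport g)
    (fun _ => isOpen_interior) hc (by
      intro x hx
      obtain ⟨y, hy, hxy⟩ := mem_iUnion₂.1 (hcov hx)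
      exact mem_iUnion.2 ⟨eqv ⟨y, hy⟩, by simpa using hxy⟩)
  have hsum : ∀ x, g x = ∑ k, χ k x * g x := by
    intro x
    by_cases hx : x ∈ tsupport g
    · have := h2 hx
      simp only [Finset.sum_apply, Pi.one_apply] at this
      rw [← Finset.sum_mul, this, one_mul]
    · simp [image_eq_zero_of_notMem_tsupport hx]
  have hcs : ∀ k, HasCompactSupport (fun x => χ k x * g x) := fun k => (h4 k).mul_right
  have hct : ∀ k, Continuous (fun x => χ k x * g x) := fun k => (χ k).continuous.mul hg
  have : (fun ψ => ∫ x in A ψ, g x ∂μ) = fun ψ => ∑ k, ∫ x in A ψ, χ k x * g x ∂μ := by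
    ext ψ
    rw [← integral_finsetSum]
    · exact integral_congr_ae (Eventually.of_forall hsum)
    · intro k _
      exact ((hct k).integrable_of_hasCompactSupport (hcs k)).integrableOn
  rw [this]
  refine DifferentiableAt.fun_sum fun k _ => ?_
  refine hd (eqv.symm k) (ht _ (eqv.symm k).2) _ (hct k) (hcs k) ?_
  exact (tsupport_mul_subset_left.trans (h1 k)).trans interior_subset

lemma dir_est {Q : Type*} [NormedAddCommGroup Q] [NormedSpace ℝ Q] {f : Q → ℝ} {f' : Q →L[ℝ] ℝ}
    {p0 : Q} (hf : HasStrictFDerivAt f f' p0) (v : Q) {ε : ℝ} (hε : 0 < ε) :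
    ∀ᶠ q in 𝓝 (p0, p0), ∀ s : ℝ, q.1 = q.2 + s • v → |f q.1 - f q.2 - s * f' v| ≤ ε * |s| := by
  have := hf.isLittleO.def (c := ε / (‖v‖ + 1)) (by positivity)
  filter_upwards [this] with q hq s hs
  rw [hs] at hq ⊢
  simp only [add_sub_cancel_left, map_smul, smul_eq_mul, Real.norm_eq_abs, norm_smul] at hq
  refine hq.trans ?_
  have : ‖v‖ ≤ ‖v‖ + 1 := by linarith
  rw [div_mul_eq_mul_div, div_le_iff₀ (by positivity)]
  have h0 : 0 ≤ |s| := abs_nonneg s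
  nlinarith [mul_nonneg hε.le h0]

/-- neighbourhood form -/
lemma dir_est' {P E : Type*} [NormedAddCommGroup P] [NormedSpace ℝ P] [NormedAddCommGroup E]
    [NormedSpace ℝ E] {f : P × E → ℝ} {f' : P × E →L[ℝ] ℝ} {ψ0 : P} {c : E}
    (hf : HasStrictFDerivAt f f' (ψ0, c)) (e : E) {ε : ℝ} (hε : 0 < ε) :
    ∃ W ∈ 𝓝 ψ0, ∃ V ∈ 𝓝 c, ∀ ψ ∈ W, ∀ x ∈ V, ∀ s : ℝ, x + s • e ∈ V →
      |f (ψ, x + s • e) - f (ψ, x) - s * f' (0, e)| ≤ ε * |s| := by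
  have h := dir_est hf (0, e) hε
  rw [nhds_prod_eq, nhds_prod_eq] at h
  rw [eventually_prod_self_iff'] at h
  obtain ⟨t, ht, h⟩ := h
  obtain ⟨W, hW, V, hV, hWV⟩ := mem_prod_iff.1 ht
  refine ⟨W, hW, V, hV, fun ψ hψ x hx s hs => ?_⟩
  have := h (ψ, x + s • e) (hWV ⟨hψ, hs⟩) (ψ, x) (hWV ⟨hψ, hx⟩) s (by simp)
  simpa using this

lemma core1D {P : Type*} [NormedAddCommGroup P] [NormedSpace ℝ P] [CompleteSpace P]
    {F : P × ℝ → ℝ} {F' : P × ℝ →L[ℝ] ℝ} {ψ0 : P} {s0 : ℝ}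
    (hF : HasStrictFDerivAt F F' (ψ0, s0)) (h0 : F (ψ0, s0) = 0) (h1 : F' (0, 1) ≠ 0) :
    ∃ V ∈ 𝓝 s0, ∀ A : P → Set ℝ, (∀ ψ, MeasurableSet (A ψ)) → 
      ∀ g : ℝ → ℝ, Continuous g → HasCompactSupport g →
      (∀ᶠ ψ in 𝓝 ψ0, ∀ s ∈ tsupport g, s ∈ A ψ ↔ 0 ≤ F (ψ, s)) → 
      tsupport g ⊆ V → DifferentiableAt ℝ (fun ψ => ∫ s in A ψ, g s) ψ0 := by
  obtain ⟨W, hW, V, hV, hWV⟩ := dir_est' hF (1 : ℝ) (ε := |F' (0, 1)| / 2) (by positivity)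
  have hinv : (F' ∘L .inr ℝ P ℝ).IsInvertible := by
    refine ⟨ContinuousLinearEquiv.unitsEquivAut ℝ (Units.mk0 (F' (0,1)) h1), ?_⟩
    ext
    simp
  have hσd := (hF.hasStrictFDerivAt_implicitFunctionOfProdDomain hinv).differentiableAt
  have hσt := hF.tendsto_implicitFunctionOfProdDomain hinv
  have hσe := hF.eventually_apply_implicitFunctionOfProdDomain hinv
  have hσ0 := (hF.eventually_apply_eq_iff_implicitFunctionOfProdDomain hinv).self_of_nhds.mp rfl
  set σ := hF.implicitFunctionOfProdDomain hinv
  simp only at hσd hσt hσe hσ0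
  refine ⟨V, hV, fun A hAm g hg hgc hA hgV => ?_⟩
  have hgi := hg.integrable_of_hasCompactSupport hgc (μ := volume)
  -- description of the set
  have hgood : ∀ᶠ ψ in 𝓝 ψ0, ∀ s ∈ tsupport g, (s ∈ A ψ ↔ 0 ≤ (s - σ ψ) * F' (0, 1)) := by
    filter_upwards [hW, hσt.eventually hV, hσe, hA] with ψ hψ hσV hσe hA s hs
    rw [hA s hs]
    have := hWV ψ hψ (σ ψ) hσV (s - σ ψ) (by simpa using hgV hs)
    simp only [smul_eq_mul, mul_one, add_sub_cancel, hσe, h0, sub_zero] at this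
    rw [div_mul_eq_mul_div, mul_comm |F' _|, ← abs_mul] at this
    rw [abs_le] at this
    rcases le_total 0 ((s - σ ψ) * F' (0, 1)) with hp | hp
    · rw [abs_of_nonneg hp] at this
      exact ⟨fun _ => hp, fun _ => by linarith⟩
    · rw [abs_of_nonpos hp] at this
      refine ⟨fun h => by linarith, fun h => by linarith⟩
  have hFTC : DifferentiableAt ℝ (fun ψ => ∫ s in s0..σ ψ, g s) ψ0 := by
    have : DifferentiableAt ℝ (fun t => ∫ s in s0..t, g s) (σ ψ0) :=
      (intervalIntegral.integral_hasDerivAt_right (hg.intervalIntegrable _ _)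
        (hg.stronglyMeasurableAtFilter _ _) hg.continuousAt).differentiableAt
    exact this.comp ψ0 hσd
  have key : ∀ ψ, (∀ s ∈ tsupport g, (s ∈ A ψ ↔ 0 ≤ (s - σ ψ) * F' (0, 1))) → 
      ∫ s in A ψ, g s = ∫ s in {s | 0 ≤ (s - σ ψ) * F' (0, 1)}, g s := by
    intro ψ h
    have hm : MeasurableSet {s | 0 ≤ (s - σ ψ) * F' (0, 1)} :=
      (isClosed_le continuous_const (by fun_prop)).measurableSet
    rw [← integral_indicator hm, ← integral_indicator (hAm ψ)]
    congr 1
    ext s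
    by_cases hs : s ∈ tsupport g
    · simp only [indicator, h s hs, mem_ofPred_eq]
    · have : g s = 0 := image_eq_zero_of_notMem_tsupport hs
      simp [indicator, this]
  rcases lt_or_gt_of_ne h1 with hneg | hpos
  · have : (fun ψ => ∫ s in A ψ, g s) =ᶠ[𝓝 ψ0]
        fun ψ => (∫ s in Iic s0, g s) + ∫ s in s0..σ ψ, g s := by
      filter_upwards [hgood] with ψ hψ
      rw [key ψ hψ, ← intervalIntegral.integral_Iic_sub_Iic hgi.integrableOn hgi.integrableOn]
      have : {s | 0 ≤ (s - σ ψ) * F' (0, 1)} = Iic (σ ψ) := by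
        ext s
        simp only [mem_ofPred_eq, mem_Iic]
        constructor <;> intro h <;> nlinarith
      rw [this]; ring
    exact ((differentiableAt_const _).add hFTC).congr_of_eventuallyEq this
  · have : (fun ψ => ∫ s in A ψ, g s) =ᶠ[𝓝 ψ0]
        fun ψ => (∫ s in Ioi s0, g s) - ∫ s in s0..σ ψ, g s := by
      filter_upwards [hgood] with ψ hψ
      rw [key ψ hψ, ← intervalIntegral.integral_Iic_sub_Iic hgi.integrableOn hgi.integrableOn]
      have : {s | 0 ≤ (s - σ ψ) * F' (0, 1)} = Ici (σ ψ) := by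
        ext s
        simp only [mem_ofPred_eq, mem_Ici]
        rw [mul_nonneg_iff_of_pos_right hpos, sub_nonneg]
      have e1 := intervalIntegral.integral_Iic_add_Ioi (b := s0) hgi.integrableOn hgi.integrableOn
      have e2 := intervalIntegral.integral_Iic_add_Ioi (b := σ ψ) hgi.integrableOn hgi.integrableOn
      rw [this, integral_Ici_eq_integral_Ioi]; linarith
    exact ((differentiableAt_const _).sub hFTC).congr_of_eventuallyEq this

lemma line_null (hd : 1 ≤ d) {T : Set (EuclideanSpace ℝ (Fin d))}
    (hT : μH[(d : ℝ) - 1] T = 0) {e : EuclideanSpace ℝ (Fin d)} (he : e ≠ 0) :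
    ∀ᵐ x : EuclideanSpace ℝ (Fin d), ∀ s : ℝ, x + s • e ∉ T := by
  set K : Submodule ℝ (EuclideanSpace ℝ (Fin d)) := (Submodule.span ℝ {e})ᗮ with hK
  have hfr : (Module.finrank ℝ K : ℝ) = (d : ℝ) - 1 := by
    have h1 := Submodule.finrank_add_finrank_orthogonal (Submodule.span ℝ {e})
    rw [finrank_span_singleton he, finrank_euclideanSpace_fin] at h1
    have h2 : ((1 + Module.finrank ℝ K : ℕ) : ℝ) = (d : ℝ) := by rw [h1]
    push_cast at h2
    linarith
  have hlip : LipschitzWith 1 K.orthogonalProjectionOnto := by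
    have := K.orthogonalProjectionOnto.lipschitz
    refine this.weaken ?_
    exact_mod_cast K.orthogonalProjectionOnto_norm_le
  have him : μH[(Module.finrank ℝ K : ℝ)] (K.orthogonalProjectionOnto '' T) = 0 := by
    have := hlip.hausdorffMeasure_image_le (d := (Module.finrank ℝ K : ℝ)) (by positivity) T
    rw [hfr] at this ⊢
    rw [hT, mul_zero] at this
    exact le_antisymm this bot_le
  set M := toMeasurable μH[(Module.finrank ℝ K : ℝ)] (K.orthogonalProjectionOnto '' T)
  have hM0 : μH[(Module.finrank ℝ K : ℝ)] M = 0 := by rw [measure_toMeasurable, him]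
  have := (ae_comp_linearMap_mem_iff (K.orthogonalProjectionOnto : EuclideanSpace ℝ (Fin d) →ₗ[ℝ] K)
    volume μH[(Module.finrank ℝ K : ℝ)] (by
      intro y
      exact ⟨y, by simp⟩) (s := Mᶜ)
      (measurableSet_toMeasurable _ _).compl).2 (by
        rw [ae_iff]; simpa using hM0)
  filter_upwards [this] with x hx s hs
  apply hx
  apply subset_toMeasurable
  refine ⟨_, hs, ?_⟩
  have he0 : K.orthogonalProjectionOnto e = 0 := by
    rw [Submodule.orthogonalProjectionOnto_eq_zero_iff, hK]
    exact Submodule.le_orthogonal_orthogonal _ (Submodule.mem_span_singleton_self e)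
  simp [he0]

lemma fub_set {D : Set (EuclideanSpace ℝ (Fin d))} (hD : MeasurableSet D)
    {S : Set ℝ} (hS : MeasurableSet S) (e : EuclideanSpace ℝ (Fin d)) :
    ∫⁻ x : EuclideanSpace ℝ (Fin d), volume {s : ℝ | s ∈ S ∧ x + s • e ∈ D} =
      volume S * volume D := by
  have hm : MeasurableSet {p : EuclideanSpace ℝ (Fin d) × ℝ | p.2 ∈ S ∧ p.1 + p.2 • e ∈ D} :=
    (measurable_snd hS).inter
      ((show Measurable fun p : EuclideanSpace ℝ (Fin d) × ℝ => p.1 + p.2 • e by fun_prop) hD)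
  have h1 := Measure.prod_apply (μ := (volume : Measure (EuclideanSpace ℝ (Fin d))))
    (ν := (volume : Measure ℝ)) hm
  have h2 := Measure.prod_apply_symm (μ := (volume : Measure (EuclideanSpace ℝ (Fin d))))
    (ν := (volume : Measure ℝ)) hm
  have h3 : ∀ s : ℝ, volume ((fun x : EuclideanSpace ℝ (Fin d) => (x, s)) ⁻¹'
      {p : EuclideanSpace ℝ (Fin d) × ℝ | p.2 ∈ S ∧ p.1 + p.2 • e ∈ D}) =
      S.indicator (fun _ => volume D) s := by
    intro s
    by_cases hs : s ∈ S
    · rw [indicator_of_mem hs, ← measure_preimage_add_right volume (s • e) D]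
      congr 1
      ext x
      simp [hs]
    · rw [indicator_of_notMem hs]
      convert measure_empty (μ := volume)
      ext x
      simp [hs]
  rw [h1] at h2
  simp_rw [h3] at h2
  rw [lintegral_indicator hS, lintegral_const, Measure.restrict_apply_univ, mul_comm] at h2
  exact h2

lemma fub_int {κ : ℝ → ℝ} (hκ : Integrable κ) (e : EuclideanSpace ℝ (Fin d))
    {F : EuclideanSpace ℝ (Fin d) → ℝ} (hF : Integrable F) :
    Integrable (fun p : ℝ × EuclideanSpace ℝ (Fin d) => κ p.1 * F (p.2 + p.1 • e))
      (volume.prod volume) := by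
  have h1 := hκ.mul_prod hF
  have h2 : MeasurePreserving (fun p : ℝ × EuclideanSpace ℝ (Fin d) => (p.1, p.2 + p.1 • e))
      (volume.prod volume) (volume.prod volume) := by
    refine MeasurePreserving.skew_product (f := id) (g := fun s x => x + s • e)
      (MeasurePreserving.id _) (by fun_prop) ?_
    exact Eventually.of_forall fun s => map_add_right_eq_self volume (s • e)
  exact h2.integrable_comp_of_integrable h1

lemma fub_eq {κ : ℝ → ℝ} (hκ : Integrable κ) (hκ1 : ∫ s, κ s = 1)
    (e : EuclideanSpace ℝ (Fin d))
    {F : EuclideanSpace ℝ (Fin d) → ℝ} (hF : Integrable F) :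
    ∫ x, ∫ s, κ s * F (x + s • e) = ∫ x, F x := by
  rw [← integral_integral_swap (f := fun s x => κ s * F (x + s • e)) (fub_int hκ e hF)]
  simp_rw [integral_const_mul]
  have : ∀ s : ℝ, ∫ x, F (x + s • e) = ∫ x, F x := fun s => integral_add_right_eq_self F (s • e)
  simp_rw [this, integral_mul_const, hκ1, one_mul]

lemma line_diff {ι P : Type*} [Finite ι] [NormedAddCommGroup P] [NormedSpace ℝ P]
    [CompleteSpace P] {Ω : Set (EuclideanSpace ℝ (Fin d))} (hΩ : IsOpen Ω)
    (f : ι → P × EuclideanSpace ℝ (Fin d) → ℝ) (ψ0 : P)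
    (hf : ∀ l, ∀ x ∈ Ω, HasStrictFDerivAt (f l) (fderiv ℝ (f l) (ψ0, x)) (ψ0, x))
    (A : P → Set (EuclideanSpace ℝ (Fin d))) (hAm : ∀ ψ, MeasurableSet (A ψ))
    (hA : ∀ ψ, ∀ x ∈ Ω, x ∈ A ψ ↔ ∀ l, 0 ≤ f l (ψ, x))
    (x e : EuclideanSpace ℝ (Fin d)) (k : ℝ → ℝ) (hk : Continuous k) (hkc : HasCompactSupport k)
    (hkΩ : ∀ s ∈ tsupport k, x + s • e ∈ Ω)
    (hsl : ∀ s ∈ tsupport k, ∀ l, f l (ψ0, x + s • e) = 0 →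
      fderiv ℝ (f l) (ψ0, x + s • e) (0, e) ≠ 0)
    (huniq : ∀ s ∈ tsupport k, ∀ l m, f l (ψ0, x + s • e) = 0 → f m (ψ0, x + s • e) = 0 → l = m) :
    DifferentiableAt ℝ (fun ψ => ∫ s in {s : ℝ | x + s • e ∈ A ψ}, k s) ψ0 := by
  have hm : ∀ ψ, MeasurableSet {s : ℝ | x + s • e ∈ A ψ} := fun ψ =>
    (show Measurable fun s : ℝ => x + s • e by fun_prop) (hAm ψ)
  refine loc_diff volume (fun ψ => {s : ℝ | x + s • e ∈ A ψ}) ψ0 k hk hkc fun s0 hs0 => ?_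
  have hx0 := hkΩ s0 hs0
  have hlc : Continuous fun s : ℝ => x + s • e := by fun_prop
  have hVΩ : ∀ᶠ s in 𝓝 s0, x + s • e ∈ Ω := hlc.continuousAt.eventually (hΩ.mem_nhds hx0)
  have hcont : ∀ l, Tendsto (fun q : P × ℝ => f l (q.1, x + q.2 • e)) (𝓝 ψ0 ×ˢ 𝓝 s0)
      (𝓝 (f l (ψ0, x + s0 • e))) := by
    intro l
    rw [← nhds_prod_eq]
    have h1 : ContinuousAt (f l) (ψ0, x + s0 • e) := (hf l _ hx0).continuousAt
    have h2 : ContinuousAt (fun q : P × ℝ => (q.1, x + q.2 • e)) (ψ0, s0) := by fun_prop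
    exact ContinuousAt.comp (f := fun q : P × ℝ => (q.1, x + q.2 • e)) (x := (ψ0, s0)) h1 h2
  by_cases hneg : ∃ l, f l (ψ0, x + s0 • e) < 0
  · obtain ⟨l, hl⟩ := hneg
    obtain ⟨W, hW, V, hV, hWV⟩ := mem_prod_iff.1 ((hcont l).eventually (gt_mem_nhds hl))
    refine ⟨V ∩ {s | x + s • e ∈ Ω}, inter_mem hV hVΩ, fun g hg hgc hgV => ?_⟩
    refine (differentiableAt_const (0 : ℝ)).congr_of_eventuallyEq ?_
    filter_upwards [hW] with ψ hψ
    refine setIntegral_eq_zero_of_forall_eq_zero fun s hs => ?_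
    by_contra hne
    have hs2 := hgV (subset_tsupport g hne)
    have h3 := (hA ψ _ hs2.2).1 hs l
    have h4 : f l (ψ, x + s • e) < 0 := hWV (show (ψ, s) ∈ W ×ˢ V from ⟨hψ, hs2.1⟩)
    linarith
  push Not at hneg
  by_cases hz : ∃ l, f l (ψ0, x + s0 • e) = 0
  · obtain ⟨l, hl⟩ := hz
    have hpos : ∀ᶠ q : P × ℝ in 𝓝 ψ0 ×ˢ 𝓝 s0, ∀ m, m ≠ l → 0 < f m (q.1, x + q.2 • e) := by
      rw [eventually_all]
      intro m
      by_cases hml : m = l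
      · simp [hml]
      · have : 0 < f m (ψ0, x + s0 • e) := lt_of_le_of_ne (hneg m)
          fun h => hml (huniq s0 hs0 m l h.symm hl)
        filter_upwards [(hcont m).eventually (lt_mem_nhds this)] with q hq _ using hq
    obtain ⟨W, hW, V, hV, hWV⟩ := mem_prod_iff.1 hpos
    have hlin : HasStrictFDerivAt (fun q : P × ℝ => (q.1, x + q.2 • e))
        ((ContinuousLinearMap.fst ℝ P ℝ).prod ((ContinuousLinearMap.snd ℝ P ℝ).smulRight e))
        (ψ0, s0) := by
      refine HasStrictFDerivAt.prodMk hasStrictFDerivAt_fst ?_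
      exact ((ContinuousLinearMap.snd ℝ P ℝ).smulRight e).hasStrictFDerivAt.const_add x
    have hstr := HasStrictFDerivAt.comp (f := fun q : P × ℝ => (q.1, x + q.2 • e)) (ψ0, s0)
      (hf l _ hx0) hlin
    obtain ⟨V', hV', hcore⟩ := core1D hstr hl (by simpa using hsl s0 hs0 l hl)
    refine ⟨V' ∩ (V ∩ {s | x + s • e ∈ Ω}), inter_mem hV' (inter_mem hV hVΩ),
      fun g hg hgc hgV => ?_⟩
    refine hcore _ hm g hg hgc ?_ (hgV.trans inter_subset_left)
    filter_upwards [hW] with ψ hψ s hs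
    have hs2 := (hgV hs).2
    refine (hA ψ _ hs2.2).trans ⟨fun h => h l, fun h m => ?_⟩
    by_cases hml : m = l
    · rw [hml]; exact h
    · exact (show 0 < f m (ψ, x + s • e) from
        hWV (show (ψ, s) ∈ W ×ˢ V from ⟨hψ, hs2.1⟩) m hml).le
  · push Not at hz
    have hpos : ∀ᶠ q : P × ℝ in 𝓝 ψ0 ×ˢ 𝓝 s0, ∀ m, 0 < f m (q.1, x + q.2 • e) := by
      rw [eventually_all]
      intro m
      have : 0 < f m (ψ0, x + s0 • e) := lt_of_le_of_ne (hneg m) (hz m).symm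
      exact (hcont m).eventually (lt_mem_nhds this)
    obtain ⟨W, hW, V, hV, hWV⟩ := mem_prod_iff.1 hpos
    refine ⟨V ∩ {s | x + s • e ∈ Ω}, inter_mem hV hVΩ, fun g hg hgc hgV => ?_⟩
    refine (differentiableAt_const (∫ s, g s)).congr_of_eventuallyEq ?_
    filter_upwards [hW] with ψ hψ
    refine setIntegral_eq_integral_of_forall_compl_eq_zero fun s hs => ?_
    by_contra hne
    have hs2 := hgV (subset_tsupport g hne)
    apply hs
    refine (hA ψ _ hs2.2).2 fun m => ?_
    exact (show 0 < f m (ψ, x + s • e) from hWV (show (ψ, s) ∈ W ×ˢ V from ⟨hψ, hs2.1⟩) m).le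

lemma loc_l {P : Type*} [NormedAddCommGroup P] [NormedSpace ℝ P]
    {Ω : Set (EuclideanSpace ℝ (Fin d))} (hΩ : IsOpen Ω)
    (f : P × EuclideanSpace ℝ (Fin d) → ℝ) (ψ0 : P)
    (hf : ∀ x ∈ Ω, HasStrictFDerivAt f (fderiv ℝ f (ψ0, x)) (ψ0, x))
    (c e : EuclideanSpace ℝ (Fin d)) (hc : c ∈ Ω) (hnn : 0 ≤ f (ψ0, c))
    (he : f (ψ0, c) = 0 → fderiv ℝ f (ψ0, c) (0, e) ≠ 0) :
    ∃ W ∈ 𝓝 ψ0, ∃ V ∈ 𝓝 c, ∃ C : ℝ, 0 ≤ C ∧ (∀ ψ ∈ W, ∀ ψ' ∈ W, ∀ x,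
      volume {s : ℝ | x + s • e ∈ V ∧ ¬ (0 ≤ f (ψ, x + s • e) ↔ 0 ≤ f (ψ', x + s • e))} ≤
        ENNReal.ofReal (C * dist ψ ψ')) ∧
      (∀ x ∈ V, f (ψ0, x) = 0 → fderiv ℝ f (ψ0, x) (0, e) ≠ 0) := by
  rcases hnn.lt_or_eq with hpos | hz
  · have h1 : ∀ᶠ q in 𝓝 (ψ0, c), 0 < f q := (hf c hc).continuousAt.eventually (lt_mem_nhds hpos)
    rw [nhds_prod_eq] at h1
    obtain ⟨W, hW, V, hV, hWV⟩ := mem_prod_iff.1 h1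
    refine ⟨W, hW, V, hV, 0, le_rfl, fun ψ hψ ψ' hψ' x => ?_, fun x hx hx0 => ?_⟩
    · rw [show {s : ℝ | x + s • e ∈ V ∧
        ¬ (0 ≤ f (ψ, x + s • e) ↔ 0 ≤ f (ψ', x + s • e))} = ∅ from ?_]
      · simp
      · ext s
        simp only [mem_ofPred_eq, mem_empty_iff_false, iff_false, not_and, not_not]
        intro hs
        have a1 : 0 < f (ψ, x + s • e) := hWV (mk_mem_prod hψ hs)
        have a2 : 0 < f (ψ', x + s • e) := hWV (mk_mem_prod hψ' hs)
        exact ⟨fun _ => a2.le, fun _ => a1.le⟩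
    · have a1 : 0 < f (ψ0, x) := hWV (mk_mem_prod (mem_of_mem_nhds hW) hx)
      exact absurd hx0 a1.ne'
  · have he := he hz.symm
    set a := |fderiv ℝ f (ψ0, c) (0, e)| / 2 with ha
    have hapos : 0 < a := by positivity
    obtain ⟨W, hW, V, hV, hWV⟩ := dir_est' (hf c hc) e hapos
    obtain ⟨K, U, hU, hK⟩ := (hf c hc).exists_lipschitzOnWith
    rw [nhds_prod_eq] at hU
    obtain ⟨W', hW', V', hV', hWV'⟩ := mem_prod_iff.1 hU
    have hlow : ∀ ψ ∈ W, ∀ x ∈ V, ∀ s : ℝ, x + s • e ∈ V →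
        a * |s| ≤ |f (ψ, x + s • e) - f (ψ, x)| := by
      intro ψ hψ x hx s hs
      have h1 := hWV ψ hψ x hx s hs
      have h2 := abs_sub_abs_le_abs_sub (s * fderiv ℝ f (ψ0, c) (0, e))
        (f (ψ, x + s • e) - f (ψ, x))
      rw [abs_sub_comm _ (f (ψ, x + s • e) - f (ψ, x)), abs_mul] at h2
      have h3 : |fderiv ℝ f (ψ0, c) (0, e)| = 2 * a := by rw [ha]; ring
      rw [h3] at h2
      nlinarith
    have hlip : ∀ ψ ∈ W', ∀ ψ' ∈ W', ∀ x ∈ V', |f (ψ, x) - f (ψ', x)| ≤ K * dist ψ ψ' := by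
      intro ψ hψ ψ' hψ' x hx
      have := hK.dist_le_mul (ψ, x) (hWV' (mk_mem_prod hψ hx)) (ψ', x) (hWV' (mk_mem_prod hψ' hx))
      rwa [Real.dist_eq, dist_prod_same_right] at this
    refine ⟨W ∩ W', inter_mem hW hW', interior V ∩ V' ∩ Ω,
      inter_mem (inter_mem (interior_mem_nhds.2 hV) hV') (hΩ.mem_nhds hc),
      2 * K / a, by positivity, ?_, ?_⟩
    · intro ψ hψ ψ' hψ' x
      refine (Real.volume_le_diam _).trans (Metric.ediam_le ?_)
      have hb : ∀ s : ℝ, s ∈ {s : ℝ | x + s • e ∈ interior V ∩ V' ∩ Ω ∧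
          ¬ (0 ≤ f (ψ, x + s • e) ↔ 0 ≤ f (ψ', x + s • e))} →
          |f (ψ, x + s • e)| ≤ K * dist ψ ψ' := by
        rintro s ⟨hs, hiff⟩
        have h1 := hlip ψ hψ.2 ψ' hψ'.2 _ hs.1.2
        refine le_trans ?_ h1
        rcases le_or_gt 0 (f (ψ, x + s • e)) with h2 | h2
        · have h3 : f (ψ', x + s • e) < 0 := by
            by_contra h; push Not at h; exact hiff ⟨fun _ => h, fun _ => h2⟩
          rw [abs_of_nonneg h2]
          exact le_trans (by linarith) (le_abs_self _)
        · have h3 : 0 ≤ f (ψ', x + s • e) := by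
            by_contra h; exact hiff ⟨fun h' => by linarith, fun h' => absurd h' h⟩
          rw [abs_of_neg h2]
          exact le_trans (by linarith) (neg_le_abs _)
      intro s hs t ht
      rw [edist_dist]
      apply ENNReal.ofReal_le_ofReal
      have h1 := hb s hs
      have h2 := hb t ht
      have h3 := hlow ψ hψ.1 (x + t • e) (interior_subset ht.1.1.1) (s - t)
        (by rw [add_assoc, ← add_smul, add_sub_cancel]; exact interior_subset hs.1.1.1)
      rw [add_assoc, ← add_smul, add_sub_cancel] at h3
      have h4 := abs_sub (f (ψ, x + s • e)) (f (ψ, x + t • e))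
      rw [Real.dist_eq, div_mul_eq_mul_div, le_div_iff₀ hapos]
      linarith
    · intro x hx hx0 hzero
      obtain ⟨W2, hW2, V2, hV2, hWV2⟩ := dir_est' (hf x hx.2) e (ε := a / 2) (by positivity)
      have hlc : Continuous fun s : ℝ => x + s • e := by fun_prop
      have hev : ∀ᶠ s in 𝓝 (0 : ℝ), x + s • e ∈ V ∩ V2 := by
        refine hlc.continuousAt.eventually ?_
        simp only [zero_smul, add_zero]
        exact inter_mem (mem_interior_iff_mem_nhds.1 hx.1.1) hV2
      have hev2 : ∃ s : ℝ, s ≠ 0 ∧ x + s • e ∈ V ∩ V2 := by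
        have : ∀ᶠ s in 𝓝[≠] (0 : ℝ), s ≠ 0 ∧ x + s • e ∈ V ∩ V2 :=
          (eventually_mem_nhdsWithin).and (hev.filter_mono nhdsWithin_le_nhds)
        exact this.exists
      obtain ⟨s, hs0, hs1, hs2⟩ := hev2
      have h1 := hlow ψ0 (mem_of_mem_nhds hW) x (interior_subset hx.1.1) s hs1
      have h2 := hWV2 ψ0 (mem_of_mem_nhds hW2) x (mem_of_mem_nhds hV2) s hs2
      rw [hzero, mul_zero, sub_zero] at h2
      have : 0 < |s| := abs_pos.2 hs0
      nlinarith


lemma fderiv_meas {α : Type*} [MeasurableSpace α] {μ : Measure α} (ψ0 : Fin N → ℝ)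
    (h : (Fin N → ℝ) → α → ℝ)
    (hm : ∀ ψ, AEStronglyMeasurable (h ψ) μ)
    (hdiff : ∀ᵐ x ∂μ, DifferentiableAt ℝ (fun ψ => h ψ x) ψ0) :
    AEStronglyMeasurable (fun x => fderiv ℝ (fun ψ => h ψ x) ψ0) μ := by
  have hco : ∀ j : Fin N, AEStronglyMeasurable
      (fun x => fderiv ℝ (fun ψ => h ψ x) ψ0 (Pi.single j 1)) μ := by
    intro j
    refine aestronglyMeasurable_of_tendsto_ae (u := atTop)
      (f := fun (n : ℕ) x => (n : ℝ) • (h (ψ0 + (n : ℝ)⁻¹ • Pi.single j 1) x - h ψ0 x))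
      (fun n => by
        have h1 := ((hm (ψ0 + (n : ℝ)⁻¹ • Pi.single j 1)).sub (hm ψ0)).const_smul (n : ℝ)
        exact h1) ?_
    filter_upwards [hdiff] with x hx
    exact (hx.hasFDerivAt.lim_real (Pi.single j 1)).comp tendsto_natCast_atTop_atTop
  have hrep : (fun x => fderiv ℝ (fun ψ => h ψ x) ψ0) = fun x => ∑ j : Fin N,
      (fderiv ℝ (fun ψ => h ψ x) ψ0 (Pi.single j 1)) •
        (ContinuousLinearMap.proj (R := ℝ) (φ := fun _ : Fin N => ℝ) j) := by
    ext x v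
    have hv : v = ∑ i, v i • (Pi.single i (1 : ℝ) : Fin N → ℝ) := by
      ext k
      simp [Finset.sum_apply, Pi.single_apply]
    conv_lhs => rw [hv]
    simp only [map_sum, map_smul, sum_apply, smul_apply,
      ContinuousLinearMap.proj_apply, smul_eq_mul]
    exact Finset.sum_congr rfl fun i _ => mul_comm _ _
  rw [hrep]
  refine Finset.aestronglyMeasurable_fun_sum _ fun j _ => ?_
  exact (hco j).smul_const _

theorem diff_main (hd : 1 ≤ d) {ι : Type*} [Finite ι]
    {Ω : Set (EuclideanSpace ℝ (Fin d))} (hΩ : IsOpen Ω)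
    (f : ι → (Fin N → ℝ) × EuclideanSpace ℝ (Fin d) → ℝ) (ψ0 : Fin N → ℝ)
    (hf : ∀ l, ∀ x ∈ Ω, HasStrictFDerivAt (f l) (fderiv ℝ (f l) (ψ0, x)) (ψ0, x))
    (A : (Fin N → ℝ) → Set (EuclideanSpace ℝ (Fin d))) (hAm : ∀ ψ, MeasurableSet (A ψ))
    (hA : ∀ ψ, ∀ x ∈ Ω, x ∈ A ψ ↔ ∀ l, 0 ≤ f l (ψ, x))
    (hgrad : ∀ x ∈ Ω, ∀ l, f l (ψ0, x) = 0 → ∃ e, fderiv ℝ (f l) (ψ0, x) (0, e) ≠ 0)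
    (hT : μH[(d : ℝ) - 1] {x ∈ Ω | ∃ l m, l ≠ m ∧ f l (ψ0, x) = 0 ∧ f m (ψ0, x) = 0} = 0)
    (g : EuclideanSpace ℝ (Fin d) → ℝ) (hg : Continuous g) (hgc : HasCompactSupport g)
    (hgΩ : tsupport g ⊆ Ω) :
    DifferentiableAt ℝ (fun ψ => ∫ x in A ψ, g x) ψ0 := by
  have := Fintype.ofFinite ι
  refine loc_diff volume A ψ0 g hg hgc fun c hc => ?_
  replace hc := hgΩ hc
  clear hgΩ hgc hg g
  by_cases hneg : ∃ l, f l (ψ0, c) < 0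
  · obtain ⟨l, hl⟩ := hneg
    have h1 : ∀ᶠ q in 𝓝 (ψ0, c), f l q < 0 :=
      (hf l c hc).continuousAt.eventually (gt_mem_nhds hl)
    rw [nhds_prod_eq] at h1
    obtain ⟨W, hW, V, hV, hWV⟩ := mem_prod_iff.1 h1
    refine ⟨V ∩ Ω, inter_mem hV (hΩ.mem_nhds hc), fun g hg hgc hgV => ?_⟩
    refine (differentiableAt_const (0 : ℝ)).congr_of_eventuallyEq ?_
    filter_upwards [hW] with ψ hψ
    refine setIntegral_eq_zero_of_forall_eq_zero fun x hx => ?_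
    by_contra hne
    have hs2 := hgV (subset_tsupport g hne)
    have h3 := (hA ψ _ hs2.2).1 hx l
    have h4 : f l (ψ, x) < 0 := hWV (mk_mem_prod hψ hs2.1)
    linarith
  push Not at hneg
  -- choice of direction
  obtain ⟨e, he⟩ := Module.Dual.exists_forall_ne_zero_of_forall_exists
    (K := ℝ) (M := EuclideanSpace ℝ (Fin d)) (ι := Option {l : ι // f l (ψ0, c) = 0})
    (fun o => match o with
      | none => ((EuclideanSpace.proj (⟨0, hd⟩ : Fin d) : EuclideanSpace ℝ (Fin d) →L[ℝ] ℝ) :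
          EuclideanSpace ℝ (Fin d) →ₗ[ℝ] ℝ)
      | some l => (((fderiv ℝ (f l) (ψ0, c)).comp (ContinuousLinearMap.inr ℝ _ _) :
          EuclideanSpace ℝ (Fin d) →L[ℝ] ℝ) : EuclideanSpace ℝ (Fin d) →ₗ[ℝ] ℝ))
    (by
      rintro (_ | ⟨l, hl⟩)
      · exact ⟨EuclideanSpace.single ⟨0, hd⟩ 1, by simp⟩
      · obtain ⟨e, he⟩ := hgrad c hc l hl
        exact ⟨e, by simpa using he⟩)
  have he0 : e ≠ 0 := by
    rintro rfl
    exact he none (by simp)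
  have hel : ∀ l, f l (ψ0, c) = 0 → fderiv ℝ (f l) (ψ0, c) (0, e) ≠ 0 := by
    intro l hl
    simpa using he (some ⟨l, hl⟩)
  choose Wl hWl Vl hVl Cl hCl hvol hslope using fun l =>
    loc_l hΩ (f l) ψ0 (hf l) c e hc (hneg l) (hel l)
  set W := ⋂ l, Wl l
  have hW : W ∈ 𝓝 ψ0 := iInter_mem.2 hWl
  set V := (⋂ l, Vl l) ∩ Ω ∩ Metric.ball c 1
  have hV : V ∈ 𝓝 c := inter_mem (inter_mem (iInter_mem.2 hVl) (hΩ.mem_nhds hc))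
    (Metric.ball_mem_nhds c one_pos)
  refine ⟨V, hV, fun g hg hgc hgV => ?_⟩
  have hgi := hg.integrable_of_hasCompactSupport hgc (μ := volume)
  obtain ⟨M, hM⟩ := hg.bounded_above_of_compact_support hgc
  let φ : ContDiffBump (0 : ℝ) := ⟨1, 2, one_pos, one_lt_two⟩
  set κ : ℝ → ℝ := φ.normed volume with hκdef
  have hκc : Continuous κ := φ.continuous_normed
  have hκs : HasCompactSupport κ := φ.hasCompactSupport_normed
  have hκ1 : ∫ s, κ s = 1 := φ.integral_normed
  have hκi : Integrable κ := hκc.integrable_of_hasCompactSupport hκs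
  have hκt : ∀ s, κ s ≠ 0 → |s| < 2 := by
    intro s hs
    have : s ∈ Function.support κ := hs
    rw [hκdef, φ.support_normed_eq] at this
    simpa [φ] using this
  obtain ⟨M2, hM2⟩ := hκc.bounded_above_of_compact_support hκs
  have hind : ∀ ψ, Integrable ((A ψ).indicator g) := fun ψ => hgi.indicator (hAm ψ)
  set h : (Fin N → ℝ) → EuclideanSpace ℝ (Fin d) → ℝ :=
    fun ψ x => ∫ s, κ s * (A ψ).indicator g (x + s • e) with hh
  have hheq : (fun ψ => ∫ x in A ψ, g x) = fun ψ => ∫ x, h ψ x := by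
    ext ψ
    rw [← integral_indicator (hAm ψ), ← fub_eq hκi hκ1 e (hind ψ)]
  rw [hheq]
  have hhint : ∀ ψ, Integrable (h ψ) := fun ψ => (fub_int hκi e (hind ψ)).integral_prod_right
  -- pointwise differentiability
  have hdiff : ∀ᵐ x, DifferentiableAt ℝ (fun ψ => h ψ x) ψ0 := by
    filter_upwards [line_null hd hT he0] with x hx
    have hk : Continuous fun s : ℝ => κ s * g (x + s • e) :=
      hκc.mul (hg.comp (by fun_prop))
    have hkc : HasCompactSupport fun s : ℝ => κ s * g (x + s • e) := hκs.mul_right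
    have hkt : ∀ s ∈ tsupport (fun s : ℝ => κ s * g (x + s • e)), x + s • e ∈ V := by
      intro s hs
      apply hgV
      have h1 : tsupport (fun s : ℝ => κ s * g (x + s • e)) ⊆
          tsupport (fun s : ℝ => g (x + s • e)) := tsupport_mul_subset_right
      exact tsupport_comp_subset_preimage g (f := fun s : ℝ => x + s • e) (by fun_prop) (h1 hs)
    have := line_diff hΩ f ψ0 hf A hAm hA x e _ hk hkc (fun s hs => (hkt s hs).1.2)
      (fun s hs l hl => hslope l _ (mem_iInter.1 (hkt s hs).1.1 l) hl)
      (fun s hs l m hl hm => by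
        by_contra hlm
        exact hx s ⟨(hkt s hs).1.2, l, m, hlm, hl, hm⟩)
    refine this.congr_of_eventuallyEq (Eventually.of_forall fun ψ => ?_)
    have hm : MeasurableSet {s : ℝ | x + s • e ∈ A ψ} :=
      (show Measurable fun s : ℝ => x + s • e by fun_prop) (hAm ψ)
    simp only [hh]
    rw [← integral_indicator hm]
    refine integral_congr_ae (Eventually.of_forall fun s => ?_)
    by_cases hs : x + s • e ∈ A ψ
    · simp [indicator, hs]
    · simp [indicator, hs]
  set R := 1 + 2 * ‖e‖
  set C := M2 * M * ∑ l, Cl l with hC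
  have hM0 : 0 ≤ M := (norm_nonneg _).trans (hM 0)
  have hM20 : 0 ≤ M2 := (norm_nonneg _).trans (hM2 0)
  have hC0 : 0 ≤ C := mul_nonneg (mul_nonneg hM20 hM0) (Finset.sum_nonneg fun l _ => hCl l)
  have hlip : ∀ x, LipschitzOnWith (Real.nnabs ((Metric.closedBall c R).indicator (fun _ => C) x))
      (fun ψ => h ψ x) W := by
    intro x
    refine LipschitzOnWith.of_dist_le_mul fun ψ hψ ψ' hψ' => ?_
    by_cases hxR : x ∈ Metric.closedBall c R
    · rw [indicator_of_mem hxR, Real.coe_nnabs, abs_of_nonneg hC0]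
      set S := ⋃ l, {s : ℝ | x + s • e ∈ Vl l ∧
        ¬ (0 ≤ f l (ψ, x + s • e) ↔ 0 ≤ f l (ψ', x + s • e))} with hS
      have hSvol : volume S ≤ ENNReal.ofReal ((∑ l, Cl l) * dist ψ ψ') := by
        refine (measure_iUnion_fintype_le _ _).trans ?_
        rw [Finset.sum_mul, ENNReal.ofReal_sum_of_nonneg
          (fun l _ => mul_nonneg (hCl l) dist_nonneg)]
        exact Finset.sum_le_sum fun l _ =>
          hvol l ψ (mem_iInter.1 hψ l) ψ' (mem_iInter.1 hψ' l) x
      have hint : ∀ ψ, Integrable (fun s => κ s * (A ψ).indicator g (x + s • e)) := by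
        intro ψ
        have hm : MeasurableSet {s : ℝ | x + s • e ∈ A ψ} :=
          (show Measurable fun s : ℝ => x + s • e by fun_prop) (hAm ψ)
        have hk : Continuous fun s : ℝ => κ s * g (x + s • e) :=
          hκc.mul (hg.comp (by fun_prop))
        have hkc : HasCompactSupport fun s : ℝ => κ s * g (x + s • e) := hκs.mul_right
        refine ((hk.integrable_of_hasCompactSupport hkc (μ := volume)).indicator hm).congr
          (Eventually.of_forall fun s => ?_)
        by_cases hs : x + s • e ∈ A ψ
        · simp [indicator, hs]
        · simp [indicator, hs]
      rw [Real.dist_eq, ← Real.norm_eq_abs, hh]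
      simp only
      rw [← integral_sub (hint ψ) (hint ψ')]
      rw [← setIntegral_eq_integral_of_forall_compl_eq_zero (s := S)]
      · have hfin : volume S < ⊤ := hSvol.trans_lt ENNReal.ofReal_lt_top
        have hb := norm_setIntegral_le_of_norm_le_const (μ := volume) (s := S) (C := M2 * M)
          (f := fun s => κ s * (A ψ).indicator g (x + s • e) -
            κ s * (A ψ').indicator g (x + s • e)) hfin (fun s _ => by
              rw [← mul_sub, norm_mul]
              refine mul_le_mul (hM2 s) ?_ (norm_nonneg _) hM20
              by_cases h1 : x + s • e ∈ A ψ <;> by_cases h2 : x + s • e ∈ A ψ' <;>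
                simp [indicator, h1, h2, hM0, hM, -Real.norm_eq_abs])
        refine hb.trans ?_
        rw [hC, mul_assoc (M2 * M)]
        refine mul_le_mul_of_nonneg_left ?_ (mul_nonneg hM20 hM0)
        exact ENNReal.toReal_le_of_le_ofReal (mul_nonneg (Finset.sum_nonneg fun l _ => hCl l)
          dist_nonneg) hSvol
      · intro s hs
        by_cases hgs : g (x + s • e) = 0
        · simp [indicator, hgs]
        have hsV := hgV (subset_tsupport g hgs)
        have hiff : x + s • e ∈ A ψ ↔ x + s • e ∈ A ψ' := by
          rw [hA _ _ hsV.1.2, hA _ _ hsV.1.2]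
          refine forall_congr' fun l => ?_
          by_contra hcon
          exact hs (mem_iUnion.2 ⟨l, mem_iInter.1 hsV.1.1 l, hcon⟩)
        by_cases h2 : x + s • e ∈ A ψ' <;> simp [indicator, hiff, h2]
    · have hz : ∀ ψ, h ψ x = 0 := by
        intro ψ
        rw [hh]
        refine integral_eq_zero_of_ae (Eventually.of_forall fun s => ?_)
        simp only [Pi.zero_apply, mul_eq_zero]
        by_contra hcon
        push Not at hcon
        have h1 := hκt s hcon.1
        have h2 : g (x + s • e) ≠ 0 := fun h0 => hcon.2 (by simp [indicator, h0])
        have h3 := (hgV (subset_tsupport g h2)).2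
        apply hxR
        rw [Metric.mem_ball, dist_eq_norm] at h3
        rw [Metric.mem_closedBall, dist_eq_norm]
        calc ‖x - c‖ = ‖(x + s • e - c) - s • e‖ := by congr 1; abel
          _ ≤ ‖x + s • e - c‖ + ‖s • e‖ := norm_sub_le _ _
          _ ≤ R := by
            rw [norm_smul, Real.norm_eq_abs]
            have := norm_nonneg e
            simp only [R]
            nlinarith
      simp only [hz, dist_self]
      positivity
  have hbi : Integrable ((Metric.closedBall c R).indicator (fun _ => C)) := by
    rw [integrable_indicator_iff Metric.isClosed_closedBall.measurableSet]
    exact integrableOn_const (isCompact_closedBall c R).measure_lt_top.ne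
  -- measurability of the derivative
  have hmeas := fderiv_meas ψ0 h (fun ψ => (hhint ψ).aestronglyMeasurable) hdiff
  exact (hasFDerivAt_integral_of_dominated_loc_of_lip (F := h) hW
    (Eventually.of_forall fun ψ => (hhint ψ).aestronglyMeasurable) (hhint ψ0) hmeas
    (Eventually.of_forall hlip) hbi
    (hdiff.mono fun x hx => hx.hasFDerivAt)).2.differentiableAt

lemma level_null {P : Type*} [NormedAddCommGroup P] [NormedSpace ℝ P]
    {Ω : Set (EuclideanSpace ℝ (Fin d))} (hΩ : IsOpen Ω)
    (f : P × EuclideanSpace ℝ (Fin d) → ℝ) (ψ0 : P)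
    (hf : ∀ x ∈ Ω, HasStrictFDerivAt f (fderiv ℝ f (ψ0, x)) (ψ0, x))
    (hgrad : ∀ x ∈ Ω, f (ψ0, x) = 0 → ∃ e, fderiv ℝ f (ψ0, x) (0, e) ≠ 0) :
    volume {x ∈ Ω | f (ψ0, x) = 0} = 0 := by
  have hcont : ContinuousOn (fun x => f (ψ0, x)) Ω := fun x hx =>
    (ContinuousAt.comp (f := fun x => (ψ0, x)) (hf x hx).continuousAt
      (by fun_prop)).continuousWithinAt
  refine measure_null_of_locally_null _ fun c hc => ?_
  obtain ⟨hcΩ, hc0⟩ := hc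
  obtain ⟨e, he⟩ := hgrad c hcΩ hc0
  obtain ⟨W, hW, V, hV, hWV⟩ := dir_est' (hf c hcΩ) e
    (ε := |fderiv ℝ f (ψ0, c) (0, e)| / 2) (by positivity)
  set O := interior V ∩ Ω
  have hO : IsOpen O := isOpen_interior.inter hΩ
  have hD : MeasurableSet (O ∩ (fun x => f (ψ0, x)) ⁻¹' {0}) := by
    have h1 := (hcont.mono (inter_subset_right : O ⊆ Ω)).isOpen_inter_preimage hO
      (isClosed_singleton (x := (0 : ℝ))).isOpen_compl
    have h2 : O ∩ (fun x => f (ψ0, x)) ⁻¹' {0} =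
        O \ (O ∩ (fun x => f (ψ0, x)) ⁻¹' {0}ᶜ) := by
      ext x; simp
    rw [h2]
    exact hO.measurableSet.diff h1.measurableSet
  refine ⟨O ∩ (fun x => f (ψ0, x)) ⁻¹' {0}, ?_, ?_⟩
  · have h1 : O ∈ 𝓝[{x ∈ Ω | f (ψ0, x) = 0}] c := mem_nhdsWithin_of_mem_nhds
      (inter_mem (interior_mem_nhds.2 hV) (hΩ.mem_nhds hcΩ))
    filter_upwards [h1, self_mem_nhdsWithin] with x hx hx2 using ⟨hx, hx2.2⟩
  · have h1 := fub_set hD (S := Icc 0 1) measurableSet_Icc e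
    have h2 : ∀ x, volume {s : ℝ | s ∈ Icc (0 : ℝ) 1 ∧
        x + s • e ∈ O ∩ (fun x => f (ψ0, x)) ⁻¹' {0}} = 0 := by
      intro x
      refine Set.Subsingleton.measure_zero ?_ _
      rintro s ⟨-, hs, hs0⟩ t ⟨-, ht, ht0⟩
      simp only [mem_preimage, mem_singleton_iff] at hs0 ht0
      have h3 := hWV ψ0 (mem_of_mem_nhds hW) (x + t • e) (interior_subset ht.1) (s - t)
        (by rw [add_assoc, ← add_smul, add_sub_cancel]; exact interior_subset hs.1)
      rw [add_assoc, ← add_smul, add_sub_cancel, hs0, ht0, sub_zero, zero_sub, abs_neg, abs_mul]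
        at h3
      by_contra hne
      have : 0 < |s - t| := abs_pos.2 (sub_ne_zero.2 hne)
      have h4 : 0 < |fderiv ℝ f (ψ0, c) (0, e)| := abs_pos.2 he
      nlinarith [mul_pos this h4]
    simp_rw [h2] at h1
    simpa using h1.symm

lemma shell_lower {P : Type*} [NormedAddCommGroup P] [NormedSpace ℝ P]
    {O : Set (EuclideanSpace ℝ (Fin d))} (hO : IsOpen O)
    (f : P × EuclideanSpace ℝ (Fin d) → ℝ) (ψ0 v : P)
    (hcont : ContinuousOn (fun x => f (ψ0, x)) O) (z e : EuclideanSpace ℝ (Fin d)) (hz : z ∈ O)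
    (hf : HasStrictFDerivAt f (fderiv ℝ f (ψ0, z)) (ψ0, z)) (hz0 : f (ψ0, z) = 0)
    (he : 0 < fderiv ℝ f (ψ0, z) (0, e)) (hv : 0 < fderiv ℝ f (ψ0, z) (v, 0)) :
    ∃ c : ℝ, 0 < c ∧ ∀ᶠ t in 𝓝[>] (0 : ℝ), ∃ D : Set (EuclideanSpace ℝ (Fin d)),
      MeasurableSet D ∧ D ⊆ O ∧ (∀ x ∈ D, f (ψ0, x) < 0 ∧ 0 ≤ f (ψ0 + t • v, x)) ∧
      ENNReal.ofReal (c * t) ≤ volume D := by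
  set L := fderiv ℝ f (ψ0, z) (0, e) with hL
  set m := fderiv ℝ f (ψ0, z) (v, 0) / 2 with hm
  have hmpos : 0 < m := by positivity
  obtain ⟨W, hW, V, hV, hWV⟩ := dir_est' hf e (ε := L / 2) (by positivity)
  have hWV := hWV ψ0 (mem_of_mem_nhds hW)
  have hinc : ∀ᶠ q : ℝ × EuclideanSpace ℝ (Fin d) in 𝓝 (0 : ℝ) ×ˢ 𝓝 z,
      |f (ψ0 + q.1 • v, q.2) - f (ψ0, q.2) - q.1 * fderiv ℝ f (ψ0, z) (v, 0)| ≤ m * |q.1| := by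
    have h1 := dir_est hf (v, 0) hmpos
    have h2 : Tendsto (fun q : ℝ × EuclideanSpace ℝ (Fin d) =>
        ((ψ0 + q.1 • v, q.2), (ψ0, q.2))) (𝓝 (0 : ℝ) ×ˢ 𝓝 z) (𝓝 ((ψ0, z), (ψ0, z))) := by
      rw [← nhds_prod_eq]
      have : ContinuousAt (fun q : ℝ × EuclideanSpace ℝ (Fin d) =>
        ((ψ0 + q.1 • v, q.2), (ψ0, q.2))) (0, z) := by fun_prop
      simpa [ContinuousAt] using this
    filter_upwards [h2.eventually h1] with q hq
    exact hq q.1 (by simp)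
  obtain ⟨T, hT, V2, hV2, hTV⟩ := mem_prod_iff.1 hinc
  obtain ⟨r, hr, hrsub⟩ := Metric.mem_nhds_iff.1
    (inter_mem (inter_mem hV hV2) (hO.mem_nhds hz))
  set B := Metric.ball z r
  set η := r / (8 * (‖e‖ + 1)) with hη
  have hηpos : 0 < η := by positivity
  have hηe : ∀ s : ℝ, |s| ≤ 2 * η → ‖s • e‖ < r / 2 := by
    intro s hs
    rw [norm_smul, Real.norm_eq_abs]
    have h1 : η * (‖e‖ + 1) = r / 8 := by rw [hη]; field_simp
    have := norm_nonneg e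
    nlinarith
  have hball : ∀ x ∈ Metric.ball z (r / 2), ∀ s : ℝ, |s| ≤ 2 * η → x + s • e ∈ B := by
    intro x hx s hs
    rw [Metric.mem_ball, dist_eq_norm] at *
    calc ‖x + s • e - z‖ = ‖(x - z) + s • e‖ := by congr 1; abel
      _ ≤ ‖x - z‖ + ‖s • e‖ := norm_add_le _ _
      _ < r := by linarith [hηe s hs]
  have hBcont : ContinuousOn (fun x => f (ψ0, x)) B := hcont.mono fun x hx => (hrsub hx).2
  have hest : ∀ x : EuclideanSpace ℝ (Fin d), ∀ s t : ℝ, s ≤ t → x + s • e ∈ B → x + t • e ∈ B →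
      L / 2 * (t - s) ≤ f (ψ0, x + t • e) - f (ψ0, x + s • e) ∧
      f (ψ0, x + t • e) - f (ψ0, x + s • e) ≤ 3 * L / 2 * (t - s) := by
    intro x s t hst hs ht
    have h3 := hWV (x + s • e) (hrsub hs).1.1 (t - s)
        (by rw [add_assoc, ← add_smul, add_sub_cancel]; exact (hrsub ht).1.1)
    rw [add_assoc, ← add_smul, add_sub_cancel, abs_of_nonneg (sub_nonneg.2 hst), abs_le] at h3
    constructor <;> nlinarith [h3.1, h3.2]
  have hzr : z ∈ Metric.ball z (r / 2) := Metric.mem_ball_self (by positivity)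
  have habs1 : |η| ≤ 2 * η := by rw [abs_of_pos hηpos]; linarith
  have habs2 : |-η| ≤ 2 * η := by rw [abs_neg]; exact habs1
  have habs0 : |(0 : ℝ)| ≤ 2 * η := by simp; exact hηpos.le
  have hp : 0 < f (ψ0, z + η • e) := by
    have := (hest z 0 η hηpos.le (hball z hzr _ habs0) (hball z hzr _ habs1)).1
    simp only [zero_smul, add_zero, hz0] at this
    nlinarith [mul_pos he hηpos]
  have hn : f (ψ0, z + (-η) • e) < 0 := by
    have := (hest z (-η) 0 (by linarith) (hball z hzr _ habs2) (hball z hzr _ habs0)).1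
    simp only [zero_smul, add_zero, hz0] at this
    nlinarith [mul_pos he hηpos]
  have hshift : ∀ s : ℝ, |s| ≤ 2 * η →
      Tendsto (fun x => f (ψ0, x + s • e)) (𝓝 z) (𝓝 (f (ψ0, z + s • e))) := by
    intro s hs
    have h1 : ContinuousAt (fun x => f (ψ0, x)) (z + s • e) :=
      hBcont.continuousAt (Metric.isOpen_ball.mem_nhds (hball z hzr s hs))
    exact ContinuousAt.comp (f := fun x => x + s • e) (g := fun x => f (ψ0, x)) h1 (by fun_prop)
  obtain ⟨r', hr', hr'sub⟩ := Metric.mem_nhds_iff.1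
    (inter_mem (inter_mem ((hshift η habs1).eventually (lt_mem_nhds hp))
      ((hshift (-η) habs2).eventually (gt_mem_nhds hn)))
      (Metric.ball_mem_nhds z (half_pos hr)))
  have hcross : ∀ x ∈ Metric.ball z r', ∃ σ ∈ Icc (-η) η, f (ψ0, x + σ • e) = 0 := by
    intro x hx
    have h1 := hr'sub hx
    have h2 : ContinuousOn (fun s : ℝ => f (ψ0, x + s • e)) (Icc (-η) η) := by
      refine hBcont.comp (f := fun s : ℝ => x + s • e) (by fun_prop) fun s hs => ?_
      exact hball x h1.2 s ((abs_le.2 hs).trans (by linarith))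
    have h3 := intermediate_value_Icc (by linarith : -η ≤ η) h2
    obtain ⟨σ, hσ, hσ0⟩ := h3 (show (0 : ℝ) ∈ _ from
      ⟨le_of_lt (show f (ψ0, x + (-η) • e) < 0 from h1.1.2),
        le_of_lt (show 0 < f (ψ0, x + η • e) from h1.1.1)⟩)
    exact ⟨σ, hσ, hσ0⟩
  set b := (volume (Metric.ball z r')).toReal with hb
  have hbpos : 0 < b := ENNReal.toReal_pos (Metric.measure_ball_pos _ _ hr').ne'
    measure_ball_lt_top.ne
  set τ := 2 * m / (3 * L) with hτ
  have hτpos : 0 < τ := by positivity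
  refine ⟨τ * b / (4 * η), by positivity, ?_⟩
  have hTev : ∀ᶠ t in 𝓝[>] (0 : ℝ), t ∈ T := nhdsWithin_le_nhds hT
  have hsm : ∀ᶠ t in 𝓝[>] (0 : ℝ), t < η / τ :=
    nhdsWithin_le_nhds (gt_mem_nhds (by positivity))
  filter_upwards [hTev, hsm, self_mem_nhdsWithin] with t htT htη ht0
  have ht0 : 0 < t := ht0
  have htη : t * τ < η := by rwa [lt_div_iff₀ hτpos] at htη
  set D := B ∩ (fun x => f (ψ0, x)) ⁻¹' Ico (-(m * t)) 0 with hDdef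
  have hDm : MeasurableSet D := by
    have h1 := hBcont.isOpen_inter_preimage Metric.isOpen_ball (isOpen_Iio (a := (0 : ℝ)))
    have h2 := hBcont.isOpen_inter_preimage Metric.isOpen_ball (isOpen_Iio (a := -(m * t)))
    have h3 : D = (B ∩ (fun x => f (ψ0, x)) ⁻¹' Iio 0) \
        (B ∩ (fun x => f (ψ0, x)) ⁻¹' Iio (-(m * t))) := by
      ext x
      simp only [hDdef, mem_inter_iff, mem_preimage, mem_Ico, Set.mem_sdiff, mem_Iio, not_and, not_lt]
      tauto
    rw [h3]
    exact h1.measurableSet.diff h2.measurableSet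
  refine ⟨D, hDm, fun x hx => (hrsub hx.1).2, fun x hx => ⟨hx.2.2, ?_⟩, ?_⟩
  · have h1 : |f (ψ0 + t • v, x) - f (ψ0, x) - t * fderiv ℝ f (ψ0, z) (v, 0)| ≤ m * |t| :=
      hTV (mk_mem_prod htT (hrsub hx.1).1.2)
    rw [abs_of_pos ht0, abs_le] at h1
    have h2 : -(m * t) ≤ f (ψ0, x) := hx.2.1
    have h3 : fderiv ℝ f (ψ0, z) (v, 0) = 2 * m := by rw [hm]; ring
    rw [h3] at h1
    nlinarith [h1.1]
  · have h1 := fub_set hDm (S := Icc (-(2 * η)) (2 * η)) measurableSet_Icc e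
    have h2 : ∀ x ∈ Metric.ball z r', ENNReal.ofReal (t * τ) ≤
        volume {s : ℝ | s ∈ Icc (-(2 * η)) (2 * η) ∧ x + s • e ∈ D} := by
      intro x hx
      obtain ⟨σ, hσ, hσ0⟩ := hcross x hx
      have hx2 := (hr'sub hx).2
      have h3 : Ioo (σ - t * τ) σ ⊆ {s : ℝ | s ∈ Icc (-(2 * η)) (2 * η) ∧ x + s • e ∈ D} := by
        intro s hs
        have hs2 : s ∈ Icc (-(2 * η)) (2 * η) :=
          ⟨by linarith [hs.1, hσ.1], by linarith [hs.2, hσ.2]⟩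
        have hsB := hball x hx2 s (abs_le.2 hs2)
        have h4 := hest x s σ hs.2.le hsB
          (hball x hx2 σ ((abs_le.2 hσ).trans (by linarith)))
        rw [hσ0] at h4
        refine ⟨hs2, hsB, ?_, ?_⟩
        · have h5 : 3 * L / 2 * (t * τ) = m * t := by rw [hτ]; field_simp
          have h6 : 3 * L / 2 * (σ - s) ≤ 3 * L / 2 * (t * τ) :=
            mul_le_mul_of_nonneg_left (by linarith [hs.1]) (by positivity)
          change -(m * t) ≤ f (ψ0, x + s • e)
          linarith [h4.2]
        · change f (ψ0, x + s • e) < 0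
          have : 0 < L / 2 * (σ - s) := mul_pos (by positivity) (by linarith [hs.2])
          linarith [h4.1]
      refine le_trans ?_ (measure_mono h3)
      rw [Real.volume_Ioo]
      exact ENNReal.ofReal_le_ofReal (by linarith)
    have h3 : ENNReal.ofReal (t * τ) * volume (Metric.ball z r') ≤
        volume (Icc (-(2 * η)) (2 * η)) * volume D := by
      rw [← h1, ← setLIntegral_const]
      exact (setLIntegral_mono' measurableSet_ball h2).trans (setLIntegral_le_lintegral _ _)
    have h4 : volume (Metric.ball z r') = ENNReal.ofReal b :=
      (ENNReal.ofReal_toReal measure_ball_lt_top.ne).symm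
    rw [h4, Real.volume_Icc, ← ENNReal.ofReal_mul (by positivity)] at h3
    rw [show τ * b / (4 * η) * t = (t * τ * b) / (4 * η) by ring,
      ENNReal.ofReal_div_of_pos (by positivity)]
    refine ENNReal.div_le_of_le_mul' ?_
    rwa [show 4 * η = 2 * η - -(2 * η) by ring]

lemma not_disconnect (hd : 1 ≤ d) {U O1 O2 T : Set (EuclideanSpace ℝ (Fin d))}
    (hU : IsOpen U) (hUc : IsPreconnected U) (h1 : IsOpen O1) (h2 : IsOpen O2)
    (h1U : O1 ⊆ U) (h2U : O2 ⊆ U) (hdis : Disjoint O1 O2) (h1n : O1.Nonempty) (h2n : O2.Nonempty)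
    (hT : μH[(d : ℝ) - 1] T = 0) : ∃ z ∈ U, z ∉ O1 ∧ z ∉ O2 ∧ z ∉ T := by
  by_contra hcon
  push Not at hcon
  have hcov : ∀ z ∈ U, z ∉ T → z ∈ O1 ∨ z ∈ O2 := by
    intro z hz hzT
    by_contra hh
    push Not at hh
    exact hzT (hcon z hz hh.1 hh.2)
  have hloc : ∀ x : EuclideanSpace ℝ (Fin d), ∀ r > 0, Metric.ball x r ⊆ U →
      ∀ p ∈ Metric.ball x r, ∀ q ∈ Metric.ball x r, p ∈ O1 → q ∈ O2 → False := by
    intro x r hr hB p hp q hq hp1 hq2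
    have hne : q - p ≠ 0 := fun h => by
      rw [sub_eq_zero] at h
      subst h
      exact disjoint_left.1 hdis hp1 hq2
    have hdense := Measure.dense_of_ae (line_null hd hT hne)
    have hopen : IsOpen ((O1 ∩ Metric.ball x r) ∩
        ((fun w => w + (q - p)) ⁻¹' (O2 ∩ Metric.ball x r))) :=
      (h1.inter Metric.isOpen_ball).inter
        ((h2.inter Metric.isOpen_ball).preimage (by fun_prop))
    obtain ⟨w, ⟨hw1, hw2⟩, hw⟩ := hdense.inter_open_nonempty _ hopen
      ⟨p, ⟨hp1, hp⟩, by simpa using ⟨hq2, hq⟩⟩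
    have hseg : IsPreconnected ((fun s : ℝ => w + s • (q - p)) '' Icc 0 1) :=
      isPreconnected_Icc.image _ (by fun_prop)
    have hsegB : ∀ s ∈ Icc (0 : ℝ) 1, w + s • (q - p) ∈ Metric.ball x r := by
      intro s hs
      have := (convex_ball x r).add_smul_sub_mem hw1.2 hw2.2 hs
      simpa using this
    obtain ⟨y, hy, hy1, hy2⟩ := hseg O1 O2 h1 h2 (by
        rintro _ ⟨s, hs, rfl⟩
        exact hcov _ (hB (hsegB s hs)) (hw s))
      ⟨w, ⟨0, by simp, by simp⟩, hw1.1⟩ ⟨w + (q - p), ⟨1, by simp, by simp⟩, hw2.1⟩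
    exact disjoint_left.1 hdis hy1 hy2
  have hcl : U ⊆ (closure O2)ᶜ ∪ (closure O1)ᶜ := by
    intro x hx
    by_contra hh
    simp only [mem_union, mem_compl_iff, not_or, not_not] at hh
    obtain ⟨r, hr, hB⟩ := Metric.isOpen_iff.1 hU x hx
    obtain ⟨q, hq, hxq⟩ := Metric.mem_closure_iff.1 hh.1 r hr
    obtain ⟨p, hp, hxp⟩ := Metric.mem_closure_iff.1 hh.2 r hr
    exact hloc x r hr hB p (by rwa [Metric.mem_ball, dist_comm]) q
      (by rwa [Metric.mem_ball, dist_comm]) hp hq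
  obtain ⟨p, hp⟩ := h1n
  obtain ⟨q, hq⟩ := h2n
  obtain ⟨x, hx, hx2, hx1⟩ := hUc _ _ isClosed_closure.isOpen_compl isClosed_closure.isOpen_compl hcl
    ⟨p, h1U hp, disjoint_left.1 (hdis.closure_right h1) hp⟩
    ⟨q, h2U hq, disjoint_left.1 (hdis.symm.closure_right h2) hq⟩
  have hopen : IsOpen (U ∩ ((closure O2)ᶜ ∩ (closure O1)ᶜ)) :=
    hU.inter (isClosed_closure.isOpen_compl.inter isClosed_closure.isOpen_compl)
  have hne : EuclideanSpace.single (⟨0, hd⟩ : Fin d) (1 : ℝ) ≠ 0 := by simp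
  obtain ⟨w, hw, hwT⟩ := (Measure.dense_of_ae (line_null hd hT hne)).inter_open_nonempty _ hopen
    ⟨x, hx, hx2, hx1⟩
  have hwT := hwT 0
  rw [zero_smul, add_zero] at hwT
  rcases hcov w hw.1 hwT with h | h
  · exact hw.2.2 (subset_closure h)
  · exact hw.2.1 (subset_closure h)

lemma lin_sys (hN : 1 ≤ N) (A : (Fin N → ℝ) →L[ℝ] (Fin N → ℝ))
    (hoff : ∀ i j, i ≠ j → 0 ≤ A (Pi.single j 1) i)
    (hsum : ∀ u, ∑ i, A u i = 0)
    (hirr : ∀ I : Finset (Fin N), I.Nonempty → Iᶜ.Nonempty →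
      ∃ i ∈ Iᶜ, ∃ j ∈ I, 0 < A (Pi.single j 1) i)
    (w : Fin N → ℝ) (hw : ∑ i, w i = 0) :
    ∃! u : Fin N → ℝ, A u = w ∧ u ⟨0, hN⟩ = 0 := by
  have hexp : ∀ u i, A u i = ∑ j, u j * A (Pi.single j 1) i := by
    intro u i
    have hv : u = ∑ k, u k • (Pi.single k (1 : ℝ) : Fin N → ℝ) := by
      ext k
      simp [Finset.sum_apply, Pi.single_apply]
    conv_lhs => rw [hv]
    simp
  have hnonpos : ∀ u, A u = 0 → u ⟨0, hN⟩ = 0 → ∀ k, u k ≤ 0 := by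
    intro u hu hu0 k
    by_contra hk
    push Not at hk
    let I : Finset (Fin N) := Finset.univ.filter fun j => 0 < u j
    have hI : ∀ j, j ∈ I ↔ 0 < u j := fun j => by simp [I]
    obtain ⟨i0, hi0, j0, hj0, hpos⟩ := hirr I ⟨k, (hI k).2 hk⟩
      ⟨⟨0, hN⟩, by rw [Finset.mem_compl, hI, hu0]; exact lt_irrefl _⟩
    have hz : ∑ i ∈ Iᶜ, ∑ j, u j * A (Pi.single j 1) i = 0 := by
      refine Finset.sum_eq_zero fun i _ => ?_
      rw [← hexp, hu]; rfl
    rw [Finset.sum_comm] at hz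
    have hterm : ∀ j, 0 ≤ ∑ i ∈ Iᶜ, u j * A (Pi.single j 1) i := by
      intro j
      rw [← Finset.mul_sum]
      by_cases hj : j ∈ I
      · refine mul_nonneg ((hI j).1 hj).le (Finset.sum_nonneg fun i hi => hoff i j ?_)
        rintro rfl
        exact Finset.mem_compl.1 hi hj
      · have h1 : u j ≤ 0 := not_lt.1 fun h => hj ((hI j).2 h)
        have h2 := hsum (Pi.single j 1)
        rw [← Finset.sum_add_sum_compl I] at h2
        have h3 : 0 ≤ ∑ i ∈ I, A (Pi.single j 1) i := Finset.sum_nonneg fun i hi => hoff i j (by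
          rintro rfl; exact hj hi)
        nlinarith
    have hall := (Finset.sum_eq_zero_iff_of_nonneg fun j _ => hterm j).1 hz j0 (Finset.mem_univ _)
    rw [← Finset.mul_sum] at hall
    have hs : 0 < ∑ i ∈ Iᶜ, A (Pi.single j0 1) i :=
      Finset.sum_pos' (fun i hi => hoff i j0 (by
        rintro rfl; exact Finset.mem_compl.1 hi hj0)) ⟨i0, hi0, hpos⟩
    exact (mul_pos ((hI j0).1 hj0) hs).ne' hall
  have hker : ∀ u, A u = 0 → u ⟨0, hN⟩ = 0 → u = 0 := by
    intro u hu hu0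
    ext k
    have h1 := hnonpos u hu hu0 k
    have h2 := hnonpos (-u) (by rw [map_neg, hu, neg_zero]) (by simp [hu0]) k
    simp only [Pi.neg_apply] at h2
    simp only [Pi.zero_apply]
    linarith
  let B : (Fin N → ℝ) →ₗ[ℝ] (Fin N → ℝ) := (A : (Fin N → ℝ) →ₗ[ℝ] (Fin N → ℝ)) +
    (LinearMap.proj (R := ℝ) (φ := fun _ : Fin N => ℝ) ⟨0, hN⟩).smulRight
      (Pi.single ⟨0, hN⟩ 1 : Fin N → ℝ)
  have hB : ∀ u, B u = A u + u ⟨0, hN⟩ • (Pi.single ⟨0, hN⟩ 1 : Fin N → ℝ) := fun u => by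
    simp [B]
  have hBs : ∀ u, ∑ i, B u i = u ⟨0, hN⟩ := by
    intro u
    rw [hB]
    simp only [Pi.add_apply, Finset.sum_add_distrib, hsum, Pi.smul_apply, smul_eq_mul,
      ← Finset.mul_sum, Finset.sum_pi_single', Finset.mem_univ, if_true, zero_add, mul_one]
  have hinj : Function.Injective B := by
    rw [← LinearMap.ker_eq_bot, LinearMap.ker_eq_bot']
    intro u hu
    have h0 : u ⟨0, hN⟩ = 0 := by rw [← hBs u, hu]; simp
    refine hker u ?_ h0
    have := hB u
    rw [hu, h0, zero_smul, add_zero] at this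
    exact this.symm
  obtain ⟨u, hu⟩ := (LinearMap.injective_iff_surjective.1 hinj) w
  have hu0 : u ⟨0, hN⟩ = 0 := by rw [← hBs u, hu, hw]
  have hAu : A u = w := by
    have := hB u
    rw [hu, hu0, zero_smul, add_zero] at this
    exact this.symm
  refine ⟨u, ⟨hAu, hu0⟩, ?_⟩
  rintro u' ⟨h1, h2⟩
  rw [← sub_eq_zero]
  refine hker _ (by rw [map_sub, h1, hAu, sub_self]) (by simp [h2, hu0])

/-- Difference of the two potentials. -/
def Fd (G : EuclideanSpace ℝ (Fin d) → Fin N → ℝ → ℝ) (i j : Fin N)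
    (p : (Fin N → ℝ) × EuclideanSpace ℝ (Fin d)) : ℝ := G p.2 i (p.1 i) - G p.2 j (p.1 j)

lemma Fd_strict {Ω : Set (EuclideanSpace ℝ (Fin d))} (hΩo : IsOpen Ω)
    (G : EuclideanSpace ℝ (Fin d) → Fin N → ℝ → ℝ)
    (hG2 : ∀ i : Fin N, ContDiffOn ℝ 2 (fun q : EuclideanSpace ℝ (Fin d) × ℝ => G q.1 i q.2)
      (Ω ×ˢ Set.univ)) (i j : Fin N) (ψ : Fin N → ℝ) (x : EuclideanSpace ℝ (Fin d)) (hx : x ∈ Ω) :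
    HasStrictFDerivAt (Fd G i j) (fderiv ℝ (Fd G i j) (ψ, x)) (ψ, x) := by
  have key : ∀ i : Fin N, ContDiffAt ℝ 2
      (fun p : (Fin N → ℝ) × EuclideanSpace ℝ (Fin d) => G p.2 i (p.1 i)) (ψ, x) := by
    intro i
    have h1 : ContDiffAt ℝ 2 (fun q : EuclideanSpace ℝ (Fin d) × ℝ => G q.1 i q.2) (x, ψ i) :=
      (hG2 i).contDiffAt ((hΩo.prod isOpen_univ).mem_nhds ⟨hx, mem_univ _⟩)
    have h2 : ContDiffAt ℝ 2
        (fun p : (Fin N → ℝ) × EuclideanSpace ℝ (Fin d) => (p.2, p.1 i)) (ψ, x) := by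
      fun_prop
    exact ContDiffAt.comp (g := fun q : EuclideanSpace ℝ (Fin d) × ℝ => G q.1 i q.2)
      (f := fun p : (Fin N → ℝ) × EuclideanSpace ℝ (Fin d) => (p.2, p.1 i)) (ψ, x) h1 h2
  exact ((key i).sub (key j)).hasStrictFDerivAt (by norm_num)

lemma Fd_dx {Ω : Set (EuclideanSpace ℝ (Fin d))}
    (G : EuclideanSpace ℝ (Fin d) → Fin N → ℝ → ℝ)
    (Gx : EuclideanSpace ℝ (Fin d) → Fin N → ℝ → EuclideanSpace ℝ (Fin d))
    (hGx : ∀ x ∈ Ω, ∀ (i : Fin N) (v : ℝ), HasGradientAt (fun x' => G x' i v) (Gx x i v) x)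
    (i j : Fin N) (ψ : Fin N → ℝ) (x : EuclideanSpace ℝ (Fin d)) (hx : x ∈ Ω)
    (hs : HasStrictFDerivAt (Fd G i j) (fderiv ℝ (Fd G i j) (ψ, x)) (ψ, x))
    (e : EuclideanSpace ℝ (Fin d)) :
    fderiv ℝ (Fd G i j) (ψ, x) (0, e) = inner ℝ (Gx x i (ψ i) - Gx x j (ψ j)) e := by
  have h1 : HasFDerivAt (fun x' : EuclideanSpace ℝ (Fin d) => Fd G i j (ψ, x'))
      ((fderiv ℝ (Fd G i j) (ψ, x)).comp
        (ContinuousLinearMap.inr ℝ (Fin N → ℝ) (EuclideanSpace ℝ (Fin d)))) x :=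
    HasFDerivAt.comp (g := Fd G i j) (f := fun x' : EuclideanSpace ℝ (Fin d) => (ψ, x')) x
      hs.hasFDerivAt (hasFDerivAt_prodMk_right ψ x)
  have h2 := (hGx x hx i (ψ i)).hasFDerivAt.sub (hGx x hx j (ψ j)).hasFDerivAt
  have h3 := congrArg (fun L => L e) (h1.unique h2)
  simpa [inner_sub_left] using h3

lemma Fd_dv {Ω : Set (EuclideanSpace ℝ (Fin d))}
    (G : EuclideanSpace ℝ (Fin d) → Fin N → ℝ → ℝ)
    (Gv : EuclideanSpace ℝ (Fin d) → Fin N → ℝ → ℝ)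
    (hGv : ∀ x ∈ Ω, ∀ (i : Fin N) (v : ℝ), HasDerivAt (fun v' => G x i v') (Gv x i v) v)
    (i j : Fin N) (hij : i ≠ j) (ψ : Fin N → ℝ) (x : EuclideanSpace ℝ (Fin d)) (hx : x ∈ Ω)
    (hs : HasStrictFDerivAt (Fd G i j) (fderiv ℝ (Fd G i j) (ψ, x)) (ψ, x)) :
    fderiv ℝ (Fd G i j) (ψ, x) (Pi.single j 1, 0) = - Gv x j (ψ j) := by
  have h0 : HasDerivAt (fun t : ℝ => (ψ + t • (Pi.single j 1 : Fin N → ℝ), x))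
      ((Pi.single j 1 : Fin N → ℝ), (0 : EuclideanSpace ℝ (Fin d))) 0 := by
    refine HasDerivAt.prodMk ?_ (hasDerivAt_const _ _)
    simpa using ((hasDerivAt_id (0 : ℝ)).smul_const (Pi.single j 1 : Fin N → ℝ)).const_add ψ
  have hs' : HasFDerivAt (Fd G i j) (fderiv ℝ (Fd G i j) (ψ, x))
      (ψ + (0 : ℝ) • (Pi.single j 1 : Fin N → ℝ), x) := by simpa using hs.hasFDerivAt
  have h1 := hs'.comp_hasDerivAt (0 : ℝ) h0
  have h2 : HasDerivAt (fun t : ℝ => G x i (ψ i) - G x j (ψ j + t)) (- Gv x j (ψ j)) 0 := by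
    have h3 : HasDerivAt (fun v' => G x j v') (Gv x j (ψ j)) (ψ j + 0) := by
      simpa using hGv x hx j (ψ j)
    simpa using (h3.comp_const_add (ψ j) 0).const_sub (G x i (ψ i))
  refine h1.unique (h2.congr_of_eventuallyEq (Eventually.of_forall fun t => ?_))
  simp [Fd, Pi.single_eq_of_ne hij]

lemma Lag_meas {Ω : Set (EuclideanSpace ℝ (Fin d))} (hΩo : IsOpen Ω)
    (G : EuclideanSpace ℝ (Fin d) → Fin N → ℝ → ℝ) (ψ : Fin N → ℝ)
    (hc : ∀ i j, ContinuousOn (fun x => Fd G i j (ψ, x)) Ω) (i : Fin N) :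
    MeasurableSet (Lag Ω G ψ i) := by
  have : Lag Ω G ψ i = ⋂ j, (Ω \ (Ω ∩ (fun x => Fd G i j (ψ, x)) ⁻¹' Iio 0)) ∩ Ω := by
    ext x
    simp only [Lag, Fd, mem_ofPred_eq, mem_iInter, mem_inter_iff, Set.mem_sdiff, mem_preimage, mem_Iio,
      not_and, not_lt, sub_nonneg]
    constructor
    · rintro ⟨h1, h2⟩ j
      exact ⟨⟨h1, fun _ => h2 j⟩, h1⟩
    · intro h
      exact ⟨(h i).2, fun j => (h j).1.2 (h j).2⟩
  rw [this]
  exact MeasurableSet.iInter fun j => (hΩo.measurableSet.diff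
    ((hc i j).isOpen_inter_preimage hΩo isOpen_Iio).measurableSet).inter hΩo.measurableSet

lemma Hfun_eq {Ω : Set (EuclideanSpace ℝ (Fin d))}
    (G : EuclideanSpace ℝ (Fin d) → Fin N → ℝ → ℝ) (ρ : EuclideanSpace ℝ (Fin d) → ℝ)
    (hρ0 : ∀ x, 0 ≤ ρ x) (hρi : Integrable ρ) (ψ : Fin N → ℝ) (i : Fin N)
    (hm : MeasurableSet (Lag Ω G ψ i)) :
    Hfun Ω G ρ ψ i = ∫ x in Lag Ω G ψ i, ρ x := by
  rw [Hfun, withDensity_apply _ hm, integral_eq_lintegral_of_nonneg_ae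
    (Eventually.of_forall hρ0) hρi.aestronglyMeasurable.restrict]

lemma G_anti {Ω : Set (EuclideanSpace ℝ (Fin d))}
    (G : EuclideanSpace ℝ (Fin d) → Fin N → ℝ → ℝ)
    (Gv : EuclideanSpace ℝ (Fin d) → Fin N → ℝ → ℝ)
    (hGv : ∀ x ∈ Ω, ∀ (i : Fin N) (v : ℝ), HasDerivAt (fun v' => G x i v') (Gv x i v) v)
    (hMono : ∀ x ∈ Ω, ∀ (i : Fin N) (v : ℝ), Gv x i v < 0)
    (x : EuclideanSpace ℝ (Fin d)) (hx : x ∈ Ω) (i : Fin N) : StrictAnti (G x i) :=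
  strictAnti_of_deriv_neg fun v => by
    have := (hGv x hx i v).deriv
    rw [show deriv (G x i) v = _ from this]; exact hMono x hx i v

/-- Linear growth of a component gives a lower bound for its derivative. -/
lemma dir_lower {H : (Fin N → ℝ) → ℝ} {ψ v : Fin N → ℝ} {L : (Fin N → ℝ) →L[ℝ] ℝ}
    (hH : HasFDerivAt H L ψ) (c : ℝ)
    (hc : ∀ᶠ t in 𝓝[>] (0 : ℝ), c * t ≤ H (ψ + t • v) - H ψ) : c ≤ L v := by
  have h0 : HasDerivAt (fun t : ℝ => ψ + t • v) v 0 := by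
    simpa using ((hasDerivAt_id (0 : ℝ)).smul_const v).const_add ψ
  have hH' : HasFDerivAt H L (ψ + (0 : ℝ) • v) := by simpa using hH
  have h1 : HasDerivAt (fun t : ℝ => H (ψ + t • v)) (L v) 0 := hH'.comp_hasDerivAt (0 : ℝ) h0
  have h2 := h1.tendsto_slope_zero_right
  refine ge_of_tendsto h2 ?_
  filter_upwards [hc, self_mem_nhdsWithin] with t ht ht0
  have ht0' : (0 : ℝ) < t := ht0
  simp only [zero_add, zero_smul, add_zero, smul_eq_mul]
  rw [← div_eq_inv_mul, le_div_iff₀ ht0']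
  exact ht
/-- Proposition 3.8: the Newton system `DH(ψ)u = H(ψ) − ν`, `u₁ = 0` has a unique
solution. -/
theorem newton_system_unique_solution
    (hd : 1 ≤ d) (hN : 1 ≤ N)
    {Ω : Set (EuclideanSpace ℝ (Fin d))} (hΩo : IsOpen Ω) (hΩb : Bornology.IsBounded Ω)
    (y : Fin N → EuclideanSpace ℝ (Fin d)) (hy : Function.Injective y)
    (G : EuclideanSpace ℝ (Fin d) → Fin N → ℝ → ℝ)
    (Gx : EuclideanSpace ℝ (Fin d) → Fin N → ℝ → EuclideanSpace ℝ (Fin d))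
    (Gv : EuclideanSpace ℝ (Fin d) → Fin N → ℝ → ℝ)
    (hGx : ∀ x ∈ Ω, ∀ (i : Fin N) (v : ℝ), HasGradientAt (fun x' => G x' i v) (Gx x i v) x)
    (hGv : ∀ x ∈ Ω, ∀ (i : Fin N) (v : ℝ), HasDerivAt (fun v' => G x i v') (Gv x i v) v)
    (hGxc : ∀ i : Fin N, ContinuousOn (fun q : EuclideanSpace ℝ (Fin d) × ℝ => Gx q.1 i q.2) (Ω ×ˢ Set.univ))
    (hGvc : ∀ i : Fin N, ContinuousOn (fun q : EuclideanSpace ℝ (Fin d) × ℝ => Gv q.1 i q.2) (Ω ×ˢ Set.univ))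
    (hG2 : ∀ i : Fin N, ContDiffOn ℝ 2 (fun q : EuclideanSpace ℝ (Fin d) × ℝ => G q.1 i q.2) (Ω ×ˢ Set.univ))
    (hReg : ∀ α β : ℝ, α < β → ∃ C : ℝ, ∀ x ∈ Ω, ∀ i : Fin N, ∀ v ∈ Set.Icc α β, ‖Gx x i v‖ ≤ C)
    (hMono : ∀ x ∈ Ω, ∀ (i : Fin N) (v : ℝ), Gv x i v < 0)
    (hTwist : ∀ x ∈ Ω, Function.Injective fun q : Fin N × ℝ => (G x q.1 q.2, Gx x q.1 q.2))
    {X : Set (EuclideanSpace ℝ (Fin d))} (hXc : IsCompact X) (hXΩ : X ⊆ Ω)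
    (ρ : EuclideanSpace ℝ (Fin d) → ℝ) (hρc : Continuous ρ) (hρ0 : ∀ x, 0 ≤ ρ x)
    (hρsupp : tsupport ρ ⊆ X) (hρ1 : (∫ x, ρ x) = 1)
    (hGenΩ : ∀ (ψ : Fin N → ℝ) (i j k : Fin N), i ≠ j → i ≠ k → j ≠ k →
      μH[(d : ℝ) - 1] (Gam Ω G ψ i j ∩ Gam Ω G ψ i k) = 0)
    (hGenX : ∀ (ψ : Fin N → ℝ) (i j : Fin N), i ≠ j →
      μH[(d : ℝ) - 1] (Gam Ω G ψ i j ∩ frontier X) = 0)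
    (hpc : IsPathConnected (interior X ∩ {x | 0 < ρ x}))
    (ν : Fin N → ℝ) (hν : (∑ i, ν i) = 1)
    (ψ : Fin N → ℝ) (hψ : ∀ i : Fin N, 0 < Hfun Ω G ρ ψ i) :
    ∃! u : Fin N → ℝ,
      fderiv ℝ (Hfun Ω G ρ) ψ u = Hfun Ω G ρ ψ - ν ∧ u ⟨0, hN⟩ = 0 := by
  have hstr := fun i j ψ x hx => Fd_strict hΩo G hG2 i j ψ x hx
  have hdx := fun i j ψ x hx => Fd_dx G Gx hGx i j ψ x hx (hstr i j ψ x hx)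
  have hdv := fun i j hij ψ x hx => Fd_dv G Gv hGv i j hij ψ x hx (hstr i j ψ x hx)
  have hanti := G_anti G Gv hGv hMono
  have hcont : ∀ i j ψ, ContinuousOn (fun x => Fd G i j (ψ, x)) Ω := fun i j ψ x hx =>
    (ContinuousAt.comp (f := fun x => (ψ, x)) (hstr i j ψ x hx).continuousAt
      (by fun_prop)).continuousWithinAt
  have hLm : ∀ ψ i, MeasurableSet (Lag Ω G ψ i) := fun ψ i =>
    Lag_meas hΩo G ψ (fun i j => hcont i j ψ) i
  -- twist
  have htw : ∀ i j, i ≠ j → ∀ ψ, ∀ x ∈ Ω, Fd G i j (ψ, x) = 0 →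
      0 < fderiv ℝ (Fd G i j) (ψ, x) (0, Gx x i (ψ i) - Gx x j (ψ j)) := by
    intro i j hij ψ x hx h0
    rw [hdx i j ψ x hx]
    refine real_inner_self_pos.2 (sub_ne_zero.2 fun h => hij ?_)
    have := @hTwist x hx (i, ψ i) (j, ψ j) (Prod.ext (sub_eq_zero.1 h0) h)
    exact congrArg Prod.fst this
  have hGnull : ∀ i j, i ≠ j → ∀ ψ, volume (Gam Ω G ψ i j) = 0 := by
    intro i j hij ψ
    have := level_null hΩo (Fd G i j) ψ (hstr i j ψ)
      (fun x hx h0 => ⟨_, (htw i j hij ψ x hx h0).ne'⟩)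
    have h2 : Gam Ω G ψ i j = {x ∈ Ω | Fd G i j (ψ, x) = 0} := by
      ext x; simp [Gam, Fd, sub_eq_zero]
    rw [h2]; exact this
  have hρcs : HasCompactSupport ρ := hXc.of_isClosed_subset (isClosed_tsupport ρ) hρsupp
  have hρi : Integrable ρ := hρc.integrable_of_hasCompactSupport hρcs
  have hHe : ∀ ψ i, Hfun Ω G ρ ψ i = ∫ x in Lag Ω G ψ i, ρ x := fun ψ i =>
    Hfun_eq G ρ hρ0 hρi ψ i (hLm ψ i)
  have hρoff : ∀ x, x ∉ X → ρ x = 0 := fun x hx => by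
    by_contra h
    exact hx (hρsupp (subset_tsupport _ h))
  -- differentiability
  have hdiff : DifferentiableAt ℝ (Hfun Ω G ρ) ψ := by
    rw [differentiableAt_pi]
    intro i
    have h1 : (fun ψ' => Hfun Ω G ρ ψ' i) = fun ψ' => ∫ x in Lag Ω G ψ' i, ρ x := by
      funext ψ'; exact hHe ψ' i
    rw [h1]
    refine diff_main hd (ι := {l // l ≠ i}) hΩo (fun l => Fd G i l) ψ
      (fun l x hx => hstr i l ψ x hx) (fun ψ' => Lag Ω G ψ' i) (fun ψ' => hLm ψ' i) ?_ ?_ ?_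
      ρ hρc hρcs (hρsupp.trans hXΩ)
    · intro ψ' x hx
      simp only [Lag, Fd, mem_ofPred_eq, sub_nonneg]
      constructor
      · intro h l; exact h.2 l
      · intro h
        refine ⟨hx, fun j => ?_⟩
        by_cases hj : j = i
        · rw [hj]
        · exact h ⟨j, hj⟩
    · intro x hx l h0
      exact ⟨_, (htw i l l.2.symm ψ x hx h0).ne'⟩
    · have h2 : {x ∈ Ω | ∃ l m : {l // l ≠ i}, l ≠ m ∧ Fd G i l (ψ, x) = 0 ∧ Fd G i m (ψ, x) = 0}
          ⊆ ⋃ l : Fin N, ⋃ m : Fin N, ⋃ (_ : i ≠ l ∧ i ≠ m ∧ l ≠ m),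
            Gam Ω G ψ i l ∩ Gam Ω G ψ i m := by
        rintro x ⟨hx, l, m, hlm, h1, h2⟩
        simp only [mem_iUnion]
        exact ⟨l, m, ⟨l.2.symm, m.2.symm, fun h => hlm (Subtype.ext h)⟩,
          ⟨hx, sub_eq_zero.1 h1⟩, ⟨hx, sub_eq_zero.1 h2⟩⟩
      refine measure_mono_null h2 ?_
      simp only [measure_iUnion_null_iff]
      rintro l m ⟨h1, h2, h3⟩
      exact hGenΩ ψ i l m h1 h2 h3
  set A := fderiv ℝ (Hfun Ω G ρ) ψ with hA
  have hcomp : ∀ i, HasFDerivAt (fun ψ' => Hfun Ω G ρ ψ' i)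
      ((ContinuousLinearMap.proj i).comp A) ψ := fun i =>
    (hasFDerivAt_pi'.1 hdiff.hasFDerivAt) i
  -- mass balance
  have hmass : ∀ ψ', ∑ i, Hfun Ω G ρ ψ' i = 1 := by
    intro ψ'
    simp only [hHe]
    have h1 := integral_iUnion_ae (μ := volume) (f := ρ) (s := fun i => Lag Ω G ψ' i)
      (fun i => (hLm ψ' i).nullMeasurableSet) (fun i j hij => measure_mono_null (fun x hx =>
        (⟨hx.1.1, le_antisymm (hx.2.2 i) (hx.1.2 j)⟩ : x ∈ Gam Ω G ψ' i j)) (hGnull i j hij ψ'))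
      hρi.integrableOn
    rw [tsum_fintype] at h1
    rw [← h1, ← hρ1]
    refine setIntegral_eq_integral_of_forall_compl_eq_zero fun x hx => hρoff x fun hxX => hx ?_
    haveI : Nonempty (Fin N) := ⟨⟨0, hN⟩⟩
    obtain ⟨i, hi⟩ := Finite.exists_max (fun i => G x i (ψ' i))
    exact mem_iUnion.2 ⟨i, hXΩ hxX, hi⟩
  have hsum : ∀ u, ∑ i, A u i = 0 := by
    intro u
    have h1 : HasFDerivAt (fun ψ' => ∑ i, Hfun Ω G ρ ψ' i)
        (∑ i, (ContinuousLinearMap.proj i).comp A) ψ := HasFDerivAt.fun_sum fun i _ => hcomp i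
    have h2 : (fun ψ' => ∑ i, Hfun Ω G ρ ψ' i) = fun _ => 1 := funext hmass
    rw [h2] at h1
    have h3 := congrArg (fun L => L u) (h1.unique (hasFDerivAt_const (1 : ℝ) ψ))
    simpa using h3
  have hsub : ∀ i j, i ≠ j → ∀ t : ℝ, 0 ≤ t →
      Lag Ω G ψ i ⊆ Lag Ω G (ψ + t • (Pi.single j 1 : Fin N → ℝ)) i := by
    rintro i j hij t ht x ⟨hx, h⟩
    refine ⟨hx, fun k => ?_⟩
    have h1 : (ψ + t • (Pi.single j 1 : Fin N → ℝ)) i = ψ i := by simp [Pi.single_eq_of_ne hij]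
    rw [h1]
    refine le_trans ((hanti x hx k).antitone ?_) (h k)
    by_cases hk : k = j
    · subst hk; simpa using ht
    · simp [Pi.single_eq_of_ne hk]
  have hoff : ∀ i j, i ≠ j → 0 ≤ A (Pi.single j 1) i := by
    intro i j hij
    refine dir_lower (hcomp i) 0 (v := Pi.single j 1) ?_
    filter_upwards [self_mem_nhdsWithin] with t ht
    rw [zero_mul, sub_nonneg, hHe, hHe]
    exact setIntegral_mono_set hρi.integrableOn (Eventually.of_forall hρ0)
      (hsub i j hij t (le_of_lt ht)).eventuallyLE
  have hpos : ∀ i j, i ≠ j → ∀ z ∈ Ω, 0 < ρ z → Fd G i j (ψ, z) = 0 →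
      (∀ k, k ≠ i → k ≠ j → 0 < Fd G i k (ψ, z)) → 0 < A (Pi.single j 1) i := by
    intro i j hij z hz hρz hz0 hk
    set O := (Ω ∩ ρ ⁻¹' Ioi (ρ z / 2)) ∩
      ⋂ k : {k : Fin N // k ≠ i ∧ k ≠ j}, Ω ∩ (fun x => Fd G i k (ψ, x)) ⁻¹' Ioi 0 with hOdef
    have hO : IsOpen O := (hΩo.inter (isOpen_Ioi.preimage hρc)).inter
      (isOpen_iInter_of_finite fun k => (hcont i k ψ).isOpen_inter_preimage hΩo isOpen_Ioi)
    have hzO : z ∈ O := ⟨⟨hz, by simp [hρz]⟩, mem_iInter.2 fun k => ⟨hz, hk k k.2.1 k.2.2⟩⟩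
    obtain ⟨c, hc, hD⟩ := shell_lower hO (Fd G i j) ψ (Pi.single j 1)
      ((hcont i j ψ).mono fun x hx => hx.1.1) z _ hzO (hstr i j ψ z hz) hz0
      (htw i j hij ψ z hz hz0) (by rw [hdv i j hij ψ z hz]; linarith [hMono z hz j (ψ j)])
    refine lt_of_lt_of_le (show 0 < ρ z / 2 * c by positivity)
      (dir_lower (hcomp i) (ρ z / 2 * c) (v := Pi.single j 1) ?_)
    filter_upwards [hD, self_mem_nhdsWithin] with t ht ht0
    obtain ⟨D, hDm, hDO, hDf, hDv⟩ := ht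
    have ht0' : (0 : ℝ) < t := ht0
    have hdisj : Disjoint (Lag Ω G ψ i) D := by
      rw [Set.disjoint_left]
      intro x hx hxD
      have h1 := (hDf x hxD).1
      have h2 := hx.2 j
      simp only [Fd] at h1
      linarith
    have hDL : D ⊆ Lag Ω G (ψ + t • (Pi.single j 1 : Fin N → ℝ)) i := by
      intro x hx
      have hxO := hDO hx
      refine ⟨hxO.1.1, fun k => ?_⟩
      by_cases hkj : k = j
      · subst hkj
        exact sub_nonneg.1 (hDf x hx).2
      by_cases hki : k = i
      · rw [hki]
      have h1 : 0 < Fd G i k (ψ, x) := (mem_iInter.1 hxO.2 ⟨k, hki, hkj⟩).2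
      have h2 : G x k (ψ k) < G x i (ψ i) := sub_pos.1 h1
      simpa [Pi.single_eq_of_ne hij, Pi.single_eq_of_ne hkj] using h2.le
    have hDfin : volume D ≠ ⊤ := measure_ne_top_of_subset (fun x hx => (hDO hx).1.1)
      hΩb.measure_lt_top.ne
    have h1 : (∫ x in Lag Ω G ψ i, ρ x) + ∫ x in D, ρ x ≤
        ∫ x in Lag Ω G (ψ + t • (Pi.single j 1 : Fin N → ℝ)) i, ρ x := by
      rw [← setIntegral_union hdisj hDm hρi.integrableOn hρi.integrableOn]
      exact setIntegral_mono_set hρi.integrableOn (Eventually.of_forall hρ0)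
        (union_subset (hsub i j hij t ht0'.le) hDL).eventuallyLE
    have h2 : ρ z / 2 * (volume D).toReal ≤ ∫ x in D, ρ x :=
      setIntegral_ge_of_const_le_real hDm hDfin (fun x hx => (hDO hx).1.2.le) hρi.integrableOn
    have h3 : c * t ≤ (volume D).toReal := (ENNReal.ofReal_le_iff_le_toReal hDfin).1 hDv
    have h4 : ρ z / 2 * (c * t) ≤ ρ z / 2 * (volume D).toReal :=
      mul_le_mul_of_nonneg_left h3 (by positivity)
    simp only [hHe]
    linarith
  refine lin_sys hN A hoff hsum ?_ _ ?_
  swap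
  · simp [Finset.sum_sub_distrib, hmass, hν]
  intro I hI hIc
  set U := interior X ∩ {x | 0 < ρ x} with hUdef
  have hUpos : IsOpen {x | 0 < ρ x} := isOpen_lt continuous_const hρc
  have hU : IsOpen U := isOpen_interior.inter hUpos
  have hUΩ : U ⊆ Ω := fun x hx => hXΩ (interior_subset hx.1)
  have hρU : ∀ x, 0 < ρ x → x ∈ U := by
    intro x hx
    refine ⟨interior_maximal (fun w hw => ?_) hUpos hx, hx⟩
    by_contra hwX
    have hw' : 0 < ρ w := hw
    rw [hρoff w hwX] at hw'
    exact lt_irrefl _ hw'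
  let OO : Finset (Fin N) → Set (EuclideanSpace ℝ (Fin d)) := fun K =>
    ⋃ i : Fin N, ⋃ (_ : i ∈ K), U ∩ ⋂ j : Fin N, ⋂ (_ : j ∉ K),
      Ω ∩ (fun x => Fd G i j (ψ, x)) ⁻¹' Ioi 0
  have hOOo : ∀ K, IsOpen (OO K) := fun K => isOpen_iUnion fun i => isOpen_iUnion fun _ =>
    hU.inter (isOpen_iInter_of_finite fun j => isOpen_iInter_of_finite fun _ =>
      (hcont i j ψ).isOpen_inter_preimage hΩo isOpen_Ioi)
  have hOOm : ∀ K x, x ∈ OO K ↔ x ∈ U ∧ ∃ i ∈ K, ∀ j ∉ K, G x j (ψ j) < G x i (ψ i) := by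
    intro K x
    simp only [OO, mem_iUnion, mem_inter_iff, mem_iInter, mem_preimage, mem_Ioi, Fd, sub_pos]
    constructor
    · rintro ⟨i, hi, hx, h⟩
      exact ⟨hx, i, hi, fun j hj => (h j hj).2⟩
    · rintro ⟨hx, i, hi, h⟩
      exact ⟨i, hi, hx, fun j hj => ⟨hUΩ hx, h j hj⟩⟩
  have hOOn : ∀ K : Finset (Fin N), K.Nonempty → (OO K).Nonempty := by
    rintro K ⟨i, hi⟩
    by_contra hne
    rw [Set.not_nonempty_iff_eq_empty] at hne
    have hsub2 : Lag Ω G ψ i ∩ U ⊆ ⋃ j : Fin N, ⋃ (_ : i ≠ j), Gam Ω G ψ i j := by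
      rintro x ⟨hxL, hxU⟩
      by_contra hx
      simp only [mem_iUnion, not_exists] at hx
      have : x ∈ OO K := (hOOm K x).2 ⟨hxU, i, hi, fun j hj =>
        lt_of_le_of_ne (hxL.2 j) fun h => hx j (fun h' => hj (h' ▸ hi)) ⟨hxL.1, h.symm⟩⟩
      rw [hne] at this
      exact this
    have hnull : volume (Lag Ω G ψ i ∩ U) = 0 := by
      refine measure_mono_null hsub2 ?_
      simp only [measure_iUnion_null_iff]
      exact fun j hj => hGnull i j hj ψ
    have h0 : ∫ x in Lag Ω G ψ i, ρ x = 0 := by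
      refine setIntegral_eq_zero_of_ae_eq_zero ?_
      rw [ae_iff]
      refine measure_mono_null (fun x hx => ?_) hnull
      simp only [mem_ofPred_eq, Classical.not_imp] at hx
      exact ⟨hx.1, hρU x (lt_of_le_of_ne (hρ0 x) (Ne.symm hx.2))⟩
    have h1 := hψ i
    rw [hHe, h0] at h1
    exact lt_irrefl _ h1
  have hT : μH[(d : ℝ) - 1] (⋃ i : Fin N, ⋃ j : Fin N, ⋃ k : Fin N,
      ⋃ (_ : i ≠ j ∧ i ≠ k ∧ j ≠ k), Gam Ω G ψ i j ∩ Gam Ω G ψ i k) = 0 := by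
    simp only [measure_iUnion_null_iff]
    rintro i j k ⟨h1, h2, h3⟩
    exact hGenΩ ψ i j k h1 h2 h3
  have hdisO : Disjoint (OO I) (OO Iᶜ) := by
    rw [Set.disjoint_left]
    intro x h1 h2
    obtain ⟨-, i, hi, h1⟩ := (hOOm _ _).1 h1
    obtain ⟨-, j, hj, h2⟩ := (hOOm _ _).1 h2
    exact lt_asymm (h1 j (Finset.mem_compl.1 hj)) (h2 i (by simpa using hi))
  obtain ⟨z, hzU, hz1, hz2, hzT⟩ := not_disconnect hd hU hpc.isConnected.isPreconnected
    (hOOo I) (hOOo Iᶜ) (fun x hx => ((hOOm _ _).1 hx).1) (fun x hx => ((hOOm _ _).1 hx).1)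
    hdisO (hOOn I hI) (hOOn Iᶜ hIc) hT
  have hzΩ := hUΩ hzU
  obtain ⟨j, hjI, hjm⟩ := Finset.exists_max_image I (fun i => G z i (ψ i)) hI
  obtain ⟨i, hiI, him⟩ := Finset.exists_max_image Iᶜ (fun i => G z i (ψ i)) hIc
  have hle1 : G z j (ψ j) ≤ G z i (ψ i) := by
    by_contra h
    push Not at h
    exact hz1 ((hOOm _ _).2 ⟨hzU, j, hjI, fun k hk =>
      lt_of_le_of_lt (him k (Finset.mem_compl.2 hk)) h⟩)
  have hle2 : G z i (ψ i) ≤ G z j (ψ j) := by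
    by_contra h
    push Not at h
    exact hz2 ((hOOm _ _).2 ⟨hzU, i, hiI, fun k hk =>
      lt_of_le_of_lt (hjm k (by simpa using hk)) h⟩)
  have hij : i ≠ j := fun h => (Finset.mem_compl.1 hiI) (h ▸ hjI)
  refine ⟨i, hiI, j, hjI, hpos i j hij z hzΩ hzU.2 (sub_eq_zero.2 (le_antisymm hle2 hle1)) ?_⟩
  intro k hki hkj
  refine sub_pos.2 (lt_of_le_of_ne ?_ fun h => hzT ?_)
  · by_cases hk : k ∈ I
    · exact (hjm k hk).trans hle1
    · exact him k (Finset.mem_compl.2 hk)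
  · simp only [mem_iUnion]
    exact ⟨i, j, k, ⟨hij, hki.symm, hkj.symm⟩, ⟨hzΩ, le_antisymm hle2 hle1⟩, ⟨hzΩ, h.symm⟩⟩
end
end

section
/- Assume G ∈ C²(Ω × Y × ℝ) satisfies (Reg), (Mono), (Twist), (UC), (Gen_Ω) and (Gen_∂X), that X ⊆ Ω is compact and ρ is a continuous probability density supported in X. Then for any δ > 0 there exists α ∈ ℝ such that the set S_ad = {ψ ∈ ℝ^N : ψ₁ = α and ∀ i ∈ {1,…,N}, Hᵢ(ψ) ≥ δ} is a compact subset of ℝ^N. Moreover, if δ ≤ 1/2^{N−1}, this set S_ad is non-empty. -/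
set_option autoImplicit false

open MeasureTheory Set

noncomputable section

variable {d N : ℕ}

lemma aux_closed_seq {E : Type*} [MeasurableSpace E] (ν : Measure E) [IsFiniteMeasure ν]
    (A : ℕ → Set E) (hA : ∀ n, MeasurableSet (A n)) (B : Set E) (c : ℝ)
    (hc : ∀ n, c ≤ (ν (A n)).toReal)
    (hAB : ∀ x, (∃ᶠ n in Filter.atTop, x ∈ A n) → x ∈ B) : c ≤ (ν B).toReal := by
  have h1 : Filter.Tendsto (fun n => ν (⋃ m ≥ n, A m)) Filter.atTop (nhds (ν (⋂ n, ⋃ m ≥ n, A m))) := by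
    apply tendsto_measure_iInter_atTop
    · intro n
      exact (MeasurableSet.iUnion fun m => MeasurableSet.iUnion fun _ => hA m).nullMeasurableSet
    · intro a b hab
      exact iUnion₂_mono' fun m hm => ⟨m, le_trans hab hm, subset_rfl⟩
    · exact ⟨0, measure_ne_top _ _⟩
  have h2 : ENNReal.ofReal c ≤ ν (⋂ n, ⋃ m ≥ n, A m) := by
    refine ge_of_tendsto' h1 fun n => ?_
    refine le_trans (ENNReal.ofReal_le_of_le_toReal (hc n)) (measure_mono ?_)
    intro x hx
    simp only [mem_iUnion]
    exact ⟨n, le_rfl, hx⟩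
  have h3 : ν (⋂ n, ⋃ m ≥ n, A m) ≤ ν B := by
    refine measure_mono fun x hx => hAB x ?_
    rw [Filter.frequently_atTop]
    intro n
    have := mem_iInter.1 hx n
    simp only [mem_iUnion] at this
    obtain ⟨m, hm, h⟩ := this
    exact ⟨m, hm, h⟩
  exact (ENNReal.ofReal_le_iff_le_toReal (measure_ne_top _ _)).1 (h2.trans h3)

/-- Lemma 3.7 (admissible set): for any `δ > 0` there is `α ∈ ℝ` making the set
`S_ad = {ψ : ψ₁ = α, ∀i Hᵢ(ψ) ≥ δ}` compact; it is non-empty as soon as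
`δ ≤ 1/2^(N−1)`. -/
theorem admissible_set_compact_nonempty
    (hd : 1 ≤ d) (hN : 1 ≤ N)
    {Ω : Set (EuclideanSpace ℝ (Fin d))} (hΩo : IsOpen Ω) (hΩb : Bornology.IsBounded Ω)
    (y : Fin N → EuclideanSpace ℝ (Fin d)) (hy : Function.Injective y)
    (G : EuclideanSpace ℝ (Fin d) → Fin N → ℝ → ℝ)
    (Gx : EuclideanSpace ℝ (Fin d) → Fin N → ℝ → EuclideanSpace ℝ (Fin d))
    (Gv : EuclideanSpace ℝ (Fin d) → Fin N → ℝ → ℝ)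
    (hGx : ∀ x ∈ Ω, ∀ (i : Fin N) (v : ℝ), HasGradientAt (fun x' => G x' i v) (Gx x i v) x)
    (hGv : ∀ x ∈ Ω, ∀ (i : Fin N) (v : ℝ), HasDerivAt (fun v' => G x i v') (Gv x i v) v)
    (hGxc : ∀ i : Fin N, ContinuousOn (fun q : EuclideanSpace ℝ (Fin d) × ℝ => Gx q.1 i q.2) (Ω ×ˢ Set.univ))
    (hGvc : ∀ i : Fin N, ContinuousOn (fun q : EuclideanSpace ℝ (Fin d) × ℝ => Gv q.1 i q.2) (Ω ×ˢ Set.univ))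
    (hG2 : ∀ i : Fin N, ContDiffOn ℝ 2 (fun q : EuclideanSpace ℝ (Fin d) × ℝ => G q.1 i q.2) (Ω ×ˢ Set.univ))
    (hReg : ∀ α β : ℝ, α < β → ∃ C : ℝ, ∀ x ∈ Ω, ∀ i : Fin N, ∀ v ∈ Set.Icc α β, ‖Gx x i v‖ ≤ C)
    (hMono : ∀ x ∈ Ω, ∀ (i : Fin N) (v : ℝ), Gv x i v < 0)
    (hTwist : ∀ x ∈ Ω, Function.Injective fun q : Fin N × ℝ => (G x q.1 q.2, Gx x q.1 q.2))
    (hUC : ∀ (i : Fin N) (M : ℝ), ∃ v₀ : ℝ, ∀ v ≤ v₀, ∀ x ∈ Ω, M ≤ G x i v)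
    {X : Set (EuclideanSpace ℝ (Fin d))} (hXc : IsCompact X) (hXΩ : X ⊆ Ω)
    (ρ : EuclideanSpace ℝ (Fin d) → ℝ) (hρc : Continuous ρ) (hρ0 : ∀ x, 0 ≤ ρ x)
    (hρsupp : tsupport ρ ⊆ X) (hρ1 : (∫ x, ρ x) = 1)
    (hGenΩ : ∀ (ψ : Fin N → ℝ) (i j k : Fin N), i ≠ j → i ≠ k → j ≠ k →
      μH[(d : ℝ) - 1] (Gam Ω G ψ i j ∩ Gam Ω G ψ i k) = 0)
    (hGenX : ∀ (ψ : Fin N → ℝ) (i j : Fin N), i ≠ j →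
      μH[(d : ℝ) - 1] (Gam Ω G ψ i j ∩ frontier X) = 0)
 :
    ∀ δ : ℝ, 0 < δ → ∃ α : ℝ,
      IsCompact {ψ : Fin N → ℝ | ψ ⟨0, hN⟩ = α ∧ ∀ i : Fin N, δ ≤ Hfun Ω G ρ ψ i} ∧
      (δ ≤ 1 / 2 ^ (N - 1) →
        {ψ : Fin N → ℝ | ψ ⟨0, hN⟩ = α ∧ ∀ i : Fin N, δ ≤ Hfun Ω G ρ ψ i}.Nonempty) := by
  classical
  intro δ hδ
  set ν : Measure (EuclideanSpace ℝ (Fin d)) := volume.withDensity fun x => ENNReal.ofReal (ρ x) with hν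
  have hH : ∀ ψ i, Hfun Ω G ρ ψ i = (ν (Lag Ω G ψ i)).toReal := fun _ _ => rfl
  have hint : Integrable ρ := by
    by_contra h
    rw [integral_undef h] at hρ1
    exact zero_ne_one hρ1
  have hν1 : ν univ = 1 := by
    rw [hν, withDensity_apply _ MeasurableSet.univ, Measure.restrict_univ,
      ← ofReal_integral_eq_lintegral_ofReal hint (Filter.Eventually.of_forall hρ0), hρ1,
      ENNReal.ofReal_one]
  have hprob : IsProbabilityMeasure ν := ⟨hν1⟩
  have hνX : ν Xᶜ = 0 := by
    rw [hν, withDensity_apply _ hXc.measurableSet.compl]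
    rw [setLIntegral_congr_fun (g := fun _ => 0) hXc.measurableSet.compl]
    · simp
    · intro x hx
      have : ρ x = 0 := by
        by_contra h
        exact hx (hρsupp (subset_tsupport _ h))
      simp [this]
  have hνX1 : ν X = 1 := by
    rwa [prob_compl_eq_zero_iff hXc.measurableSet] at hνX
  have hanti : ∀ x ∈ Ω, ∀ i, StrictAnti (G x i) := fun x hx i =>
    strictAnti_of_hasDerivAt_neg (fun v => hGv x hx i v) (fun v => hMono x hx i v)
  have hcv : ∀ x ∈ Ω, ∀ i, Continuous (G x i) := fun x hx i =>
    continuous_iff_continuousAt.2 fun v => (hGv x hx i v).continuousAt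
  have hcx : ∀ i v, ContinuousOn (fun x => G x i v) Ω := fun i v x hx =>
    (hGx x hx i v).continuousAt.continuousWithinAt
  have hbd : ∀ i v, ∃ C, ∀ x ∈ X, G x i v ≤ C := by
    intro i v
    obtain ⟨C, hC⟩ := hXc.bddAbove_image ((hcx i v).mono hXΩ)
    exact ⟨C, fun x hx => hC ⟨x, hx, rfl⟩⟩
  have hmeas : ∀ ψ i, MeasurableSet (Lag Ω G ψ i) := by
    intro ψ i
    have : Lag Ω G ψ i = Ω \ ⋃ j, (Ω ∩ (fun x => G x i (ψ i) - G x j (ψ j)) ⁻¹' Iio 0) := by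
      ext x
      simp only [Lag, mem_setOf_eq, mem_diff, mem_iUnion, mem_inter_iff, mem_preimage, mem_Iio,
        not_exists, not_and, not_lt, sub_nonneg]
      exact ⟨fun h => ⟨h.1, fun j _ => h.2 j⟩, fun h => ⟨h.1, fun j => h.2 j h.1⟩⟩
    rw [this]
    refine hΩo.measurableSet.diff (MeasurableSet.iUnion fun j => ?_)
    exact (((hcx i _).sub (hcx j _)).isOpen_inter_preimage hΩo isOpen_Iio).measurableSet
  -- upper semicontinuity
  have husc : ∀ (i : Fin N) (c : ℝ) (u : ℕ → Fin N → ℝ) (ψ : Fin N → ℝ),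
      (∀ n, c ≤ Hfun Ω G ρ (u n) i) → Filter.Tendsto u Filter.atTop (nhds ψ) →
      c ≤ Hfun Ω G ρ ψ i := by
    intro i c u ψ hu hlim
    refine aux_closed_seq ν (fun n => Lag Ω G (u n) i) (fun n => hmeas _ _) _ c hu ?_
    intro x hx
    have hxΩ : x ∈ Ω := by
      obtain ⟨n, hn⟩ := hx.exists
      exact hn.1
    refine ⟨hxΩ, fun j => ?_⟩
    have hl : ∀ k, Filter.Tendsto (fun n => G x k (u n k)) Filter.atTop (nhds (G x k (ψ k))) :=
      fun k => ((hcv x hxΩ k).tendsto _).comp ((tendsto_pi_nhds.1 hlim) k)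
    by_contra hlt
    push Not at hlt
    have hev := (hl i).eventually_lt (hl j) hlt
    obtain ⟨n, hn, hn'⟩ := (hx.and_eventually hev).exists
    exact absurd (hn.2 j) (not_le.2 hn')
  -- null cells
  have hzero : ∀ ψ i j, (∀ x ∈ X, G x i (ψ i) < G x j (ψ j)) → Hfun Ω G ρ ψ i = 0 := by
    intro ψ i j h
    rw [hH]
    have : ν (Lag Ω G ψ i) = 0 := by
      refine measure_mono_null (fun x hx => ?_) hνX
      intro hxX
      exact absurd (hx.2 j) (not_le.2 (h x hxX))
    simp [this]
  have hone : ∀ ψ i, (∀ x ∈ X, ∀ j, G x j (ψ j) ≤ G x i (ψ i)) → 1 ≤ Hfun Ω G ρ ψ i := by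
    intro ψ i h
    rw [hH]
    have : ν X ≤ ν (Lag Ω G ψ i) := measure_mono fun x hx => ⟨hXΩ hx, h x hx⟩
    rw [hνX1] at this
    have h2 := ENNReal.toReal_mono (measure_ne_top _ _) this
    simpa using h2
  -- choice of α
  choose C hC using fun i => hbd i 0
  obtain ⟨M, hM⟩ : ∃ M, ∀ i, C i < M := by
    obtain ⟨M, hM⟩ := (Set.finite_range C).bddAbove
    exact ⟨M + 1, fun i => lt_of_le_of_lt (hM ⟨i, rfl⟩) (lt_add_one M)⟩
  obtain ⟨α, hα⟩ := hUC ⟨0, hN⟩ M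
  have hdom : ∀ x ∈ X, ∀ i v, 0 ≤ v → G x i v < G x ⟨0, hN⟩ α := fun x hx i v hv =>
    calc G x i v ≤ G x i 0 := (hanti x (hXΩ hx) i).antitone hv
      _ ≤ C i := hC i x hx
      _ < M := hM i
      _ ≤ _ := hα α le_rfl x (hXΩ hx)
  refine ⟨α, ?_, ?_⟩
  · -- compactness
    obtain ⟨K, hK⟩ := hbd ⟨0, hN⟩ α
    choose v₀ hv₀ using fun i => hUC i (K + 1)
    refine IsCompact.of_isClosed_subset
      (isCompact_univ_pi (s := fun i => Icc (min (v₀ i) α) (max 0 α)) fun i => isCompact_Icc) ?_ ?_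
    · refine IsSeqClosed.isClosed ?_
      intro u ψ hu hlim
      refine ⟨?_, fun i => husc i δ u ψ (fun n => (hu n).2 i) hlim⟩
      have h1 := (tendsto_pi_nhds.1 hlim) ⟨0, hN⟩
      have h2 : (fun n => u n ⟨0, hN⟩) = fun _ => α := funext fun n => (hu n).1
      rw [h2] at h1
      exact (tendsto_nhds_unique h1 tendsto_const_nhds)
    · rintro ψ ⟨h0, h⟩ i -
      constructor
      · by_contra hlt
        push Not at hlt
        have hlt' := (lt_min_iff.1 hlt).1
        have := hzero ψ ⟨0, hN⟩ i (fun x hx => by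
          rw [h0]
          have a1 := hK x hx
          have a2 := hv₀ i (ψ i) hlt'.le x (hXΩ hx)
          linarith)
        have := h ⟨0, hN⟩
        linarith
      · by_contra hlt
        push Not at hlt
        have hlt' := (max_lt_iff.1 hlt).1
        have := hzero ψ i ⟨0, hN⟩ (fun x hx => by
          rw [h0]
          exact hdom x hx i _ hlt'.le)
        have := h i
        linarith
  · intro hδ2
    have key : ∀ s : Finset (Fin N), (⟨0, hN⟩ : Fin N) ∉ s → ∃ ψ : Fin N → ℝ, ψ ⟨0, hN⟩ = α ∧
        (∀ j ∈ insert ⟨0, hN⟩ s, 1 / 2 ^ s.card ≤ Hfun Ω G ρ ψ j) := by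
      intro s
      induction s using Finset.induction_on with
      | empty =>
        intro _
        refine ⟨fun j => if j = ⟨0, hN⟩ then α else 0, by simp, ?_⟩
        intro j hj
        simp only [insert_empty_eq, Finset.mem_singleton] at hj
        subst hj
        simp only [Finset.card_empty, pow_zero, div_one]
        apply hone
        intro x hx j
        by_cases hj : j = ⟨0, hN⟩
        · subst hj; exact le_rfl
        · simp only [hj, if_false, if_true]
          exact (hdom x hx j 0 le_rfl).le
      | insert k s hk ih =>
        intro h0
        have hk0 : (⟨0, hN⟩ : Fin N) ≠ k := fun h => h0 (by simp [h])
        obtain ⟨ψ, hψ0, hψ⟩ := ih (fun h => h0 (Finset.mem_insert_of_mem h))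
        rw [Finset.card_insert_of_notMem hk]
        set c : ℝ := 1 / 2 ^ (s.card + 1) with hc
        have hcpos : 0 < c := by positivity
        have hc1 : c ≤ 1 := by
          rw [hc, div_le_one (by positivity)]
          exact one_le_pow₀ (by norm_num)
        have hc2 : (1 : ℝ) / 2 ^ s.card = c + c := by
          rw [hc, pow_succ]; field_simp; norm_num
        set φ : ℝ → Fin N → ℝ := fun t => Function.update ψ k t with hφ
        have hφc : Continuous φ := continuous_const.update k continuous_id
        have hφk : ∀ t, φ t k = t := fun t => by simp [hφ]
        have hφj : ∀ t j, j ≠ k → φ t j = ψ j := fun t j hj => by simp [hφ, hj]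
        set A : Set ℝ := {t | c ≤ Hfun Ω G ρ (φ t) k} with hA
        have hAclosed : IsClosed A := by
          refine IsSeqClosed.isClosed ?_
          intro u t hu hlim
          exact husc k c (fun n => φ (u n)) (φ t) hu ((hφc.tendsto t).comp hlim)
        have hAbdd : BddAbove A := by
          refine ⟨0, fun t ht => ?_⟩
          by_contra hlt
          push Not at hlt
          have := hzero (φ t) k ⟨0, hN⟩ (fun x hx => by
            rw [hφk, hφj _ _ hk0, hψ0]
            exact hdom x hx k t hlt.le)
          have h2 : c ≤ Hfun Ω G ρ (φ t) k := ht
          linarith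
        have hAne : A.Nonempty := by
          choose D hD using fun j => hbd j (ψ j)
          obtain ⟨L, hL⟩ := (Set.finite_range D).bddAbove
          obtain ⟨t, ht⟩ := hUC k L
          refine ⟨t, hc1.trans (hone _ _ ?_)⟩
          intro x hx j
          by_cases hj : j = k
          · subst hj; exact le_rfl
          · rw [hφk, hφj _ _ hj]
            exact (hD j x hx).trans ((hL ⟨j, rfl⟩).trans (ht t le_rfl x (hXΩ hx)))
        set T := sSup A with hT
        have hTA : T ∈ A := hAclosed.csSup_mem hAne hAbdd
        have hloss : ∀ t j, j ≠ k →
            Hfun Ω G ρ ψ j ≤ Hfun Ω G ρ (φ t) j + Hfun Ω G ρ (φ t) k := by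
          intro t j hj
          simp only [hH]
          rw [← ENNReal.toReal_add (measure_ne_top _ _) (measure_ne_top _ _)]
          refine ENNReal.toReal_mono (by finiteness) ?_
          refine le_trans (measure_mono ?_) (measure_union_le _ _)
          intro x hx
          by_cases hle : G x k t ≤ G x j (ψ j)
          · left
            refine ⟨hx.1, fun i => ?_⟩
            rw [hφj t j hj]
            by_cases hi : i = k
            · subst hi; rw [hφk]; exact hle
            · rw [hφj t i hi]; exact hx.2 i
          · right
            push Not at hle
            refine ⟨hx.1, fun i => ?_⟩
            rw [hφk]
            by_cases hi : i = k
            · subst hi; rw [hφk]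
            · rw [hφj t i hi]; exact (hx.2 i).trans hle.le
        refine ⟨φ T, by rw [hφj _ _ hk0, hψ0], ?_⟩
        intro j hj
        by_cases hjk : j = k
        · subst hjk; exact hTA
        · have hj' : j ∈ insert ⟨0, hN⟩ s := by
            simp only [Finset.mem_insert] at hj ⊢
            tauto
          have hj2 := hψ j hj'
          have hlim : Filter.Tendsto (fun n : ℕ => T + 1 / ((n : ℝ) + 1)) Filter.atTop (nhds T) := by
            simpa using (tendsto_const_nhds (x := T)).add tendsto_one_div_add_atTop_nhds_zero_nat
          refine husc j c (fun n : ℕ => φ (T + 1 / ((n : ℝ) + 1))) (φ T) ?_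
            ((hφc.tendsto T).comp hlim)
          intro n
          have hpos : 0 < 1 / ((n : ℝ) + 1) := by positivity
          have hn : T + 1 / ((n : ℝ) + 1) ∉ A := fun h => by
            have := le_csSup hAbdd h
            linarith
          have hn' : Hfun Ω G ρ (φ (T + 1 / ((n : ℝ) + 1))) k < c := not_le.1 hn
          have := hloss (T + 1 / ((n : ℝ) + 1)) j hjk
          show c ≤ Hfun Ω G ρ (φ (T + 1 / ((n : ℝ) + 1))) j
          linarith
    obtain ⟨ψ, h0, h⟩ := key (Finset.univ.erase ⟨0, hN⟩) (Finset.notMem_erase _ _)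
    refine ⟨ψ, h0, fun i => ?_⟩
    have := h i (by simp)
    rw [Finset.card_erase_of_mem (Finset.mem_univ _), Finset.card_univ, Fintype.card_fin] at this
    exact hδ2.trans this
end
end

section
/- Assume G ∈ C²(Ω × Y × ℝ) satisfies (Reg), (Mono), (Twist), (UC), (Gen_Ω) and (Gen_∂X), that X ⊆ Ω is compact, that ρ is a continuous probability density supported in X, and that int(X) ∩ {ρ > 0} is path-connected. Then for every ν ∈ ℝ^N with νᵢ > 0 for all i and Σᵢ νᵢ = 1, there exists ψ ∈ ℝ^N such that H(ψ) = ν, i.e., μ(Lagᵢ(ψ)) = νᵢ for all i ∈ {1,…,N} (existence of an Alexandrov solution of the semi-discrete generated Jacobian equation). -/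
set_option autoImplicit false

open MeasureTheory Set

noncomputable section

variable {d N : ℕ}

lemma aux_meas {Ω : Set (EuclideanSpace ℝ (Fin d))} (hΩo : IsOpen Ω)
    {f g : EuclideanSpace ℝ (Fin d) → ℝ} (hf : ContinuousOn f Ω) (hg : ContinuousOn g Ω) :
    MeasurableSet {x ∈ Ω | f x ≤ g x} := by
  have h : ContinuousOn (fun x => g x - f x) Ω := hg.sub hf
  have h1 := h.isOpen_inter_preimage hΩo (isOpen_Iio (a := (0:ℝ)))
  have : {x ∈ Ω | f x ≤ g x} = Ω \ (Ω ∩ (fun x => g x - f x) ⁻¹' Set.Iio 0) := by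
    ext x
    simp only [Set.mem_setOf_eq, Set.mem_diff, Set.mem_inter_iff, Set.mem_preimage, Set.mem_Iio]
    constructor
    · rintro ⟨a, b⟩
      exact ⟨a, fun h => by linarith [h.2]⟩
    · rintro ⟨a, b⟩
      refine ⟨a, ?_⟩
      by_contra hc
      exact b ⟨a, by linarith⟩
  rw [this]
  exact hΩo.measurableSet.diff h1.measurableSet

lemma aux_null (hd : 1 ≤ d) {s : Set (EuclideanSpace ℝ (Fin d))} (hs : MeasurableSet s)
    (f : EuclideanSpace ℝ (Fin d) → ℝ) (g : EuclideanSpace ℝ (Fin d) → EuclideanSpace ℝ (Fin d))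
    (hf : ∀ x ∈ s, f x = 0) (hg : ∀ x ∈ s, HasGradientAt f (g x) x) (hg0 : ∀ x ∈ s, g x ≠ 0) :
    volume s = 0 := by
  obtain ⟨e, he⟩ : ∃ e : EuclideanSpace ℝ (Fin d), e ≠ 0 := by
    haveI : Nonempty (Fin d) := ⟨⟨0, hd⟩⟩
    exact exists_ne 0
  have h1 : ApproximatesLinearOn (fun x => f x • e)
      (0 : EuclideanSpace ℝ (Fin d) →L[ℝ] EuclideanSpace ℝ (Fin d)) s 0 := by
    intro x hx z hz
    simp [hf x hx, hf z hz]
  have h2 := h1.norm_fderiv_sub_le volume hs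
    (fun x => (InnerProductSpace.toDual ℝ _ (g x)).smulRight e)
    (fun x hx => ((hg x hx).hasFDerivAt.smul_const e).hasFDerivWithinAt)
  rw [ae_restrict_iff' hs] at h2
  have : ∀ᵐ x ∂volume, x ∉ s := by
    filter_upwards [h2] with x hx hxs
    have h3 := hx hxs
    simp only [sub_zero, nonpos_iff_eq_zero, nnnorm_eq_zero] at h3
    have h4 := congrArg (fun L => L (g x)) h3
    simp [he, hg0 x hxs] at h4
  simpa [ae_iff] using this

/-- Existence of an Alexandrov solution of the semi-discrete generated Jacobian
equation `H(ψ) = ν`. -/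
theorem exists_alexandrov_solution
    (hd : 1 ≤ d) (hN : 1 ≤ N)
    {Ω : Set (EuclideanSpace ℝ (Fin d))} (hΩo : IsOpen Ω) (hΩb : Bornology.IsBounded Ω)
    (y : Fin N → EuclideanSpace ℝ (Fin d)) (hy : Function.Injective y)
    (G : EuclideanSpace ℝ (Fin d) → Fin N → ℝ → ℝ)
    (Gx : EuclideanSpace ℝ (Fin d) → Fin N → ℝ → EuclideanSpace ℝ (Fin d))
    (Gv : EuclideanSpace ℝ (Fin d) → Fin N → ℝ → ℝ)
    (hGx : ∀ x ∈ Ω, ∀ (i : Fin N) (v : ℝ), HasGradientAt (fun x' => G x' i v) (Gx x i v) x)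
    (hGv : ∀ x ∈ Ω, ∀ (i : Fin N) (v : ℝ), HasDerivAt (fun v' => G x i v') (Gv x i v) v)
    (hGxc : ∀ i : Fin N, ContinuousOn (fun q : EuclideanSpace ℝ (Fin d) × ℝ => Gx q.1 i q.2) (Ω ×ˢ Set.univ))
    (hGvc : ∀ i : Fin N, ContinuousOn (fun q : EuclideanSpace ℝ (Fin d) × ℝ => Gv q.1 i q.2) (Ω ×ˢ Set.univ))
    (hG2 : ∀ i : Fin N, ContDiffOn ℝ 2 (fun q : EuclideanSpace ℝ (Fin d) × ℝ => G q.1 i q.2) (Ω ×ˢ Set.univ))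
    (hReg : ∀ α β : ℝ, α < β → ∃ C : ℝ, ∀ x ∈ Ω, ∀ i : Fin N, ∀ v ∈ Set.Icc α β, ‖Gx x i v‖ ≤ C)
    (hMono : ∀ x ∈ Ω, ∀ (i : Fin N) (v : ℝ), Gv x i v < 0)
    (hTwist : ∀ x ∈ Ω, Function.Injective fun q : Fin N × ℝ => (G x q.1 q.2, Gx x q.1 q.2))
    (hUC : ∀ (i : Fin N) (M : ℝ), ∃ v₀ : ℝ, ∀ v ≤ v₀, ∀ x ∈ Ω, M ≤ G x i v)
    {X : Set (EuclideanSpace ℝ (Fin d))} (hXc : IsCompact X) (hXΩ : X ⊆ Ω)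
    (ρ : EuclideanSpace ℝ (Fin d) → ℝ) (hρc : Continuous ρ) (hρ0 : ∀ x, 0 ≤ ρ x)
    (hρsupp : tsupport ρ ⊆ X) (hρ1 : (∫ x, ρ x) = 1)
    (hGenΩ : ∀ (ψ : Fin N → ℝ) (i j k : Fin N), i ≠ j → i ≠ k → j ≠ k →
      μH[(d : ℝ) - 1] (Gam Ω G ψ i j ∩ Gam Ω G ψ i k) = 0)
    (hGenX : ∀ (ψ : Fin N → ℝ) (i j : Fin N), i ≠ j →
      μH[(d : ℝ) - 1] (Gam Ω G ψ i j ∩ frontier X) = 0)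
    (hpc : IsPathConnected (interior X ∩ {x | 0 < ρ x}))
 :
    ∀ ν : Fin N → ℝ, (∀ i : Fin N, 0 < ν i) → (∑ i, ν i) = 1 →
      ∃ ψ : Fin N → ℝ, ∀ i : Fin N, Hfun Ω G ρ ψ i = ν i := by
  classical
  intro ν hν hν1
  set μ : Measure (EuclideanSpace ℝ (Fin d)) :=
    volume.withDensity fun x => ENNReal.ofReal (ρ x) with hμ
  have hρi : Integrable ρ := by
    by_contra h
    rw [integral_undef h] at hρ1
    norm_num at hρ1
  have hμu : μ Set.univ = 1 := by
    rw [hμ, withDensity_apply _ MeasurableSet.univ, Measure.restrict_univ,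
      ← ofReal_integral_eq_lintegral_ofReal hρi (Filter.Eventually.of_forall hρ0), hρ1]
    simp
  haveI : IsProbabilityMeasure μ := ⟨hμu⟩
  have hac : μ ≪ volume := withDensity_absolutelyContinuous _ _
  have hμX : μ Xᶜ = 0 := by
    rw [hμ, withDensity_apply _ hXc.measurableSet.compl]
    rw [setLIntegral_congr_fun (g := fun _ => 0) hXc.measurableSet.compl]
    · simp
    · intro x hx
      have : ρ x = 0 := by
        by_contra h
        exact hx (hρsupp (subset_tsupport ρ h))
      simp [this]
  have hXae : ∀ᵐ x ∂μ, x ∈ X := by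
    rw [ae_iff]; exact hμX
  have hcx : ∀ i v, ContinuousOn (fun x => G x i v) Ω := fun i v x hx =>
    (hGx x hx i v).hasFDerivAt.continuousAt.continuousWithinAt
  have hcv : ∀ x ∈ Ω, ∀ i, Continuous (fun v => G x i v) := fun x hx i =>
    continuous_iff_continuousAt.2 fun v => (hGv x hx i v).continuousAt
  have hanti : ∀ x ∈ Ω, ∀ i, Antitone (fun v => G x i v) := fun x hx i =>
    antitone_of_deriv_nonpos (fun v => (hGv x hx i v).differentiableAt)
      (fun v => by rw [(hGv x hx i v).deriv]; exact (hMono x hx i v).le)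
  have hLm : ∀ ψ i, MeasurableSet (Lag Ω G ψ i) := by
    intro ψ i
    have : Lag Ω G ψ i = ⋂ j, {x ∈ Ω | G x j (ψ j) ≤ G x i (ψ i)} := by
      ext x
      simp only [Lag, Set.mem_setOf_eq, Set.mem_iInter]
      exact ⟨fun h j => ⟨h.1, h.2 j⟩, fun h => ⟨(h i).1, fun j => (h j).2⟩⟩
    rw [this]
    exact MeasurableSet.iInter fun j => aux_meas hΩo (hcx _ _) (hcx _ _)
  have hGm : ∀ ψ i j, MeasurableSet (Gam Ω G ψ i j) := by
    intro ψ i j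
    have : Gam Ω G ψ i j = {x ∈ Ω | G x i (ψ i) ≤ G x j (ψ j)} ∩
        {x ∈ Ω | G x j (ψ j) ≤ G x i (ψ i)} := by
      ext x
      simp only [Gam, Set.mem_setOf_eq, Set.mem_inter_iff]
      exact ⟨fun h => ⟨⟨h.1, h.2.le⟩, h.1, h.2.ge⟩, fun h => ⟨h.1.1, le_antisymm h.1.2 h.2.2⟩⟩
    rw [this]
    exact (aux_meas hΩo (hcx _ _) (hcx _ _)).inter (aux_meas hΩo (hcx _ _) (hcx _ _))
  have hG0 : ∀ ψ i j, i ≠ j → μ (Gam Ω G ψ i j) = 0 := by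
    intro ψ i j hij
    apply hac
    refine aux_null hd (hGm ψ i j) (fun x => G x i (ψ i) - G x j (ψ j))
      (fun x => Gx x i (ψ i) - Gx x j (ψ j)) (fun x hx => sub_eq_zero.2 hx.2) ?_ ?_
    · intro x hx
      have := (hGx x hx.1 i (ψ i)).hasFDerivAt.sub (hGx x hx.1 j (ψ j)).hasFDerivAt
      rw [hasGradientAt_iff_hasFDerivAt, map_sub]
      exact this
    · intro x hx h0
      have h := @hTwist x hx.1 (i, ψ i) (j, ψ j) (Prod.ext hx.2 (sub_eq_zero.1 h0))
      exact hij (congrArg Prod.fst h)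
  have hsum : ∀ ψ, ∑ i, Hfun Ω G ρ ψ i = 1 := by
    intro ψ
    have h1 : μ (⋃ i, Lag Ω G ψ i) = ∑' i, μ (Lag Ω G ψ i) := by
      apply measure_iUnion₀
      · intro i j hij
        refine measure_mono_null ?_ (hG0 ψ i j hij)
        rintro x ⟨h, h'⟩
        exact ⟨h.1, le_antisymm (h'.2 i) (h.2 j)⟩
      · exact fun i => (hLm ψ i).nullMeasurableSet
    have h2 : μ (⋃ i, Lag Ω G ψ i) = 1 := by
      rw [prob_compl_eq_zero_iff (MeasurableSet.iUnion (hLm ψ)) |>.symm]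
      refine measure_mono_null ?_ hμX
      intro x hx hxX
      apply hx
      haveI : Nonempty (Fin N) := ⟨⟨0, hN⟩⟩
      obtain ⟨i, hi⟩ := Finite.exists_max (fun i => G x i (ψ i))
      exact Set.mem_iUnion.2 ⟨i, hXΩ hxX, hi⟩
    rw [h2, tsum_fintype] at h1
    have h3 := congrArg ENNReal.toReal h1
    rw [ENNReal.toReal_sum (fun i _ => measure_ne_top _ _)] at h3
    simpa [Hfun] using h3.symm
  have hcont : ∀ i, Continuous (fun ψ => Hfun Ω G ρ ψ i) := by
    intro i
    rw [continuous_iff_continuousAt]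
    intro ψ₀
    refine (ENNReal.tendsto_toReal (measure_ne_top μ _)).comp ?_
    refine tendsto_measure_of_ae_tendsto_indicator_of_isFiniteMeasure (nhds ψ₀) (hLm ψ₀ i)
      (fun ψ => hLm ψ i) ?_
    have hae : ∀ᵐ x ∂μ, ∀ j, i ≠ j → x ∉ Gam Ω G ψ₀ i j := by
      rw [ae_all_iff]
      intro j
      by_cases hij : i = j
      · simp [hij]
      · have : ∀ᵐ x ∂μ, x ∉ Gam Ω G ψ₀ i j := by
          rw [ae_iff]; simpa using hG0 ψ₀ i j hij
        filter_upwards [this] with x hx _ using hx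
    filter_upwards [hae, hXae] with x hx hxX
    have hxΩ := hXΩ hxX
    have hc : ∀ j, Continuous fun ψ : Fin N → ℝ => G x j (ψ j) := fun j =>
      (hcv x hxΩ j).comp (continuous_apply j)
    by_cases hxL : x ∈ Lag Ω G ψ₀ i
    · have : ∀ᶠ ψ in nhds ψ₀, ∀ j, G x j (ψ j) ≤ G x i (ψ i) := by
        rw [Filter.eventually_all]
        intro j
        by_cases hij : i = j
        · subst hij; exact Filter.Eventually.of_forall fun _ => le_rfl
        · have hlt : G x j (ψ₀ j) < G x i (ψ₀ i) :=
            lt_of_le_of_ne (hxL.2 j) (fun h => hx j hij ⟨hxΩ, h.symm⟩)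
          filter_upwards [((hc j).continuousAt).eventually_lt ((hc i).continuousAt) hlt] with ψ h
            using h.le
      filter_upwards [this] with ψ h
      exact iff_of_true ⟨hxΩ, h⟩ hxL
    · have : ∃ j, G x i (ψ₀ i) < G x j (ψ₀ j) := by
        by_contra! h
        exact hxL ⟨hxΩ, h⟩
      obtain ⟨j, hj⟩ := this
      filter_upwards [((hc i).continuousAt).eventually_lt ((hc j).continuousAt) hj] with ψ h
      exact iff_of_false (fun h' => absurd (h'.2 j) (not_le.2 h)) hxL
  have hbdd : ∀ i v, ∃ C, ∀ x ∈ X, G x i v < C := by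
    intro i v
    obtain ⟨C, hC⟩ := (hXc.image_of_continuousOn ((hcx i v).mono hXΩ)).bddAbove
    exact ⟨C + 1, fun x hx => by linarith [hC (Set.mem_image_of_mem _ hx)]⟩
  have hzero : ∀ ψ i j, (∀ x ∈ X, G x i (ψ i) < G x j (ψ j)) → Hfun Ω G ρ ψ i = 0 := by
    intro ψ i j h
    have : μ (Lag Ω G ψ i) = 0 := by
      refine measure_mono_null ?_ hμX
      intro x hx hxX
      exact absurd (hx.2 j) (not_le.2 (h x hxX))
    change (μ (Lag Ω G ψ i)).toReal = 0
    rw [this]; rfl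
  let i0 : Fin N := ⟨0, hN⟩
  choose C hC using fun i => hbdd i 0
  choose a ha using fun i => hUC i0 (C i)
  obtain ⟨α, hα⟩ : ∃ α, ∀ i, α ≤ a i := by
    haveI : Nonempty (Fin N) := ⟨i0⟩
    obtain ⟨k, hk⟩ := Finite.exists_min a
    exact ⟨a k, hk⟩
  obtain ⟨C', hC'⟩ := hbdd i0 α
  choose w hw using fun i => hUC i C'
  let S : Set (Fin N → ℝ) :=
    {ψ | ψ i0 = α ∧ ∀ i, i ≠ i0 → ψ i ≤ 0 ∧ Hfun Ω G ρ ψ i ≤ ν i}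
  have hSclosed : IsClosed S := by
    have : S = {ψ | ψ i0 = α} ∩ ⋂ i, ⋂ (_ : i ≠ i0),
        ({ψ | ψ i ≤ 0} ∩ {ψ | Hfun Ω G ρ ψ i ≤ ν i}) := by
      ext ψ
      simp [S]
    rw [this]
    refine (isClosed_eq (continuous_apply i0) continuous_const).inter ?_
    refine isClosed_iInter fun i => isClosed_iInter fun _ => ?_
    exact (isClosed_le (continuous_apply i) continuous_const).inter
      (isClosed_le (hcont i) continuous_const)
  have hS0 : ∀ ψ ∈ S, ν i0 ≤ Hfun Ω G ρ ψ i0 := by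
    intro ψ hψ
    have h1 := hsum ψ
    rw [← Finset.add_sum_erase _ _ (Finset.mem_univ i0)] at h1 hν1
    have h2 : ∑ i ∈ Finset.univ.erase i0, Hfun Ω G ρ ψ i ≤ ∑ i ∈ Finset.univ.erase i0, ν i :=
      Finset.sum_le_sum fun i hi => (hψ.2 i (Finset.ne_of_mem_erase hi)).2
    linarith
  have hSc : IsCompact S := by
    refine IsCompact.of_isClosed_subset
      (isCompact_Icc (a := Function.update w i0 α) (b := Function.update (0 : Fin N → ℝ) i0 α))
      hSclosed ?_
    intro ψ hψ
    constructor
    · intro i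
      by_cases hi : i = i0
      · subst hi; simp [hψ.1]
      · simp only [Function.update_of_ne hi]
        by_contra! h
        have := hzero ψ i0 i (fun x hx => by
          rw [hψ.1]
          exact (hC' x hx).trans_le (hw i _ h.le x (hXΩ hx)))
        linarith [hS0 ψ hψ, hν i0]
    · intro i
      by_cases hi : i = i0
      · subst hi; simp [hψ.1]
      · simp only [Function.update_of_ne hi]
        exact (hψ.2 i hi).1
  have hSne : S.Nonempty := by
    refine ⟨Function.update (0 : Fin N → ℝ) i0 α, by simp, fun i hi => ⟨by simp [hi], ?_⟩⟩
    rw [hzero _ i i0]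
    · exact (hν i).le
    · intro x hx
      simp only [Function.update_of_ne hi, Function.update_self, Pi.zero_apply]
      exact (hC i x hx).trans_le (ha i α (hα i) x (hXΩ hx))
  obtain ⟨ψ, hψ, hmin⟩ := hSc.exists_isMinOn hSne
    (f := fun ψ => ∑ i, ψ i) (by fun_prop)
  have key : ∀ i, i ≠ i0 → Hfun Ω G ρ ψ i = ν i := by
    intro i hi
    refine le_antisymm (hψ.2 i hi).2 ?_
    by_contra! hlt
    have hc : Continuous fun t : ℝ => Hfun Ω G ρ (Function.update ψ i (ψ i - t)) i :=
      (hcont i).comp (continuous_const.update i (continuous_const.sub continuous_id))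
    have hev : ∀ᶠ t in nhds (0:ℝ), Hfun Ω G ρ (Function.update ψ i (ψ i - t)) i < ν i :=
      hc.continuousAt.eventually_lt continuousAt_const (by simpa using hlt)
    obtain ⟨t, ht, ht0⟩ := ((hev.filter_mono nhdsWithin_le_nhds).and
      (self_mem_nhdsWithin (s := Set.Ioi (0:ℝ)))).exists
    have ht0 : 0 < t := ht0
    have hmem : Function.update ψ i (ψ i - t) ∈ S := by
      refine ⟨by rw [Function.update_of_ne hi.symm]; exact hψ.1, fun j hj => ?_⟩
      by_cases hji : j = i
      · subst hji
        refine ⟨?_, ht.le⟩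
        rw [Function.update_self]
        linarith [(hψ.2 j hj).1]
      · refine ⟨by rw [Function.update_of_ne hji]; exact (hψ.2 j hj).1, ?_⟩
        refine le_trans ?_ (hψ.2 j hj).2
        refine ENNReal.toReal_mono (measure_ne_top μ _) (measure_mono ?_)
        intro x hx
        refine ⟨hx.1, fun k => ?_⟩
        have h := hx.2 k
        rw [Function.update_of_ne hji] at h
        refine le_trans ?_ h
        by_cases hk : k = i
        · subst hk
          rw [Function.update_self]
          exact hanti x hx.1 k (by linarith)
        · rw [Function.update_of_ne hk]
    have h := hmin hmem
    simp only [Set.mem_setOf_eq] at h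
    rw [Finset.sum_update_of_mem (Finset.mem_univ i),
      ← Finset.add_sum_erase _ _ (Finset.mem_univ i), Finset.sdiff_singleton_eq_erase] at h
    linarith
  refine ⟨ψ, fun i => ?_⟩
  by_cases hi : i = i0
  · subst hi
    have h1 := hsum ψ
    rw [← Finset.add_sum_erase _ _ (Finset.mem_univ i0)] at h1 hν1
    rw [Finset.sum_congr rfl fun i hi => key i (Finset.ne_of_mem_erase hi)] at h1
    linarith
  · exact key i hi
end
end

section
/- Let X ⊆ ℝ² be compact, Y ⊆ ℝ² finite, and let γ > 0 satisfy γ · ‖x − y‖ < 1 for all (x,y) ∈ X × Y. Define G(x,y,v) = 1/(2v) − (v/2)‖x − y‖² for v > 0, so that ∇ₓG(x,y,v) = v(y − x). Then for every x ∈ X, the map (y,v) ↦ (G(x,y,v), v(y − x)) is injective on Y × (0, γ]; that is, if y₁, y₂ ∈ Y and v₁, v₂ ∈ (0,γ] satisfy G(x,y₁,v₁) = G(x,y₂,v₂) and v₁(y₁ − x) = v₂(y₂ − x), then (y₁,v₁) = (y₂,v₂). -/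
set_option autoImplicit false

open MeasureTheory Set

noncomputable section

/-- Proposition 4.1: the generating function `G(x,y,v) = 1/(2v) − (v/2)‖x−y‖²` of the
near-field parallel reflector problem satisfies the Twist condition on `X × Y × (0,γ]`
when `γ‖x−y‖ < 1` on `X × Y`. -/
theorem reflector_twist_condition
    (X Y : Set (EuclideanSpace ℝ (Fin 2))) (hX : IsCompact X) (hY : Y.Finite)
    (γ : ℝ) (hγ : 0 < γ) (hγXY : ∀ x ∈ X, ∀ y ∈ Y, γ * ‖x - y‖ < 1) :
    ∀ x ∈ X, ∀ y₁ ∈ Y, ∀ y₂ ∈ Y, ∀ v₁ ∈ Set.Ioc 0 γ, ∀ v₂ ∈ Set.Ioc 0 γ,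
      1 / (2 * v₁) - v₁ / 2 * ‖x - y₁‖ ^ 2 = 1 / (2 * v₂) - v₂ / 2 * ‖x - y₂‖ ^ 2 →
      v₁ • (y₁ - x) = v₂ • (y₂ - x) →
      y₁ = y₂ ∧ v₁ = v₂ := by
  intro x hx y₁ hy₁ y₂ hy₂ v₁ hv₁ v₂ hv₂ hG hv
  obtain ⟨h1, h1'⟩ := hv₁
  obtain ⟨h2, h2'⟩ := hv₂
  have hn : v₁ * ‖x - y₁‖ = v₂ * ‖x - y₂‖ := by
    have h := congrArg norm hv
    rwa [norm_smul, norm_smul, Real.norm_of_nonneg h1.le, Real.norm_of_nonneg h2.le,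
      norm_sub_rev, norm_sub_rev y₂] at h
  have hlt : v₁ * ‖x - y₁‖ < 1 :=
    lt_of_le_of_lt (mul_le_mul_of_nonneg_right h1' (norm_nonneg _)) (hγXY x hx y₁ hy₁)
  have hp0 : 0 ≤ v₁ * ‖x - y₁‖ := by positivity
  generalize ‖x - y₁‖ = a at *
  generalize ‖x - y₂‖ = b at *
  have e1 : v₂ * (1 - (v₁ * a) ^ 2) = 2 * v₁ * v₂ * (1 / (2 * v₁) - v₁ / 2 * a ^ 2) := by
    field_simp
  have e2 : v₁ * (1 - (v₂ * b) ^ 2) = 2 * v₁ * v₂ * (1 / (2 * v₂) - v₂ / 2 * b ^ 2) := by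
    field_simp
  have e3 : v₂ * (1 - (v₁ * a) ^ 2) = v₁ * (1 - (v₁ * a) ^ 2) := by
    rw [e1, hG, ← e2, hn]
  have hpos : 1 - (v₁ * a) ^ 2 ≠ 0 := by
    have : 0 < 1 - (v₁ * a) ^ 2 := by nlinarith
    exact this.ne'
  have hvv : v₁ = v₂ := (mul_right_cancel₀ hpos e3).symm
  refine ⟨?_, hvv⟩
  rw [← hvv] at hv
  exact sub_left_injective (smul_right_injective _ h1.ne' hv)
end
end

section
/- Let Ω ⊆ ℝ² be open and bounded, Y = {y₁,…,y_N} ⊆ ℝ² distinct points such that no three points of Y are collinear, and G(x,y,v) = 1/(2v) − (v/2)‖x − y‖². Then for every ψ ∈ (0,∞)^N and all distinct indices i, j, k in {1,…,N}, the set Γᵢⱼ(ψ) ∩ Γᵢₖ(ψ) has one-dimensional Hausdorff measure zero, where Γᵢⱼ(ψ) = {x ∈ Ω : G(x,yᵢ,ψᵢ) = G(x,y_j,ψ_j)}; that is, G satisfies the genericity condition (Gen_Ω). (Indeed each Γᵢⱼ(ψ) is contained in a circle centered on the line through yᵢ and y_j or in a line, and two such distinct circles/lines with different centers intersect in at most two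 points.) -/
set_option autoImplicit false

open MeasureTheory Set

noncomputable section

theorem quad_finite (a b c : ℝ) (h : a ≠ 0 ∨ b ≠ 0) :
    {s : ℝ | a * s ^ 2 + b * s + c = 0}.Finite := by
  set P : Polynomial ℝ := Polynomial.C a * Polynomial.X ^ 2 + Polynomial.C b * Polynomial.X
    + Polynomial.C c with hP
  have hne : P ≠ 0 := by
    intro h0
    have h2 : P.coeff 2 = a := by
      simp [hP, Polynomial.coeff_X, Polynomial.coeff_C]
    have h1 : P.coeff 1 = b := by
      simp [hP, Polynomial.coeff_X_pow, Polynomial.coeff_C]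
    rw [h0, Polynomial.coeff_zero] at h1 h2
    rcases h with h | h
    · exact h h2.symm
    · exact h h1.symm
  refine (Polynomial.finite_setOf_isRoot hne).subset ?_
  intro s hs
  simpa [hP, Polynomial.IsRoot] using hs

theorem circ_finite (A B C D : ℝ) :
    {s : ℝ | s = (A * s + B) ^ 2 + (C * s + D) ^ 2}.Finite := by
  refine (quad_finite (A ^ 2 + C ^ 2) (2 * A * B + 2 * C * D - 1) (B ^ 2 + D ^ 2) ?_).subset ?_
  · by_contra! h
    obtain ⟨h1, h2⟩ := h
    have hA : A = 0 := by nlinarith [sq_nonneg A, sq_nonneg C]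
    have hC : C = 0 := by nlinarith [sq_nonneg A, sq_nonneg C]
    subst hA hC
    norm_num at h2
  · intro s hs
    simp only [mem_setOf_eq] at hs ⊢
    linarith

theorem pair_finite (Z : EuclideanSpace ℝ (Fin 2)) (a l m e b l' m' e' : ℝ)
    (hd : l * m' - l' * m ≠ 0) :
    {x : EuclideanSpace ℝ (Fin 2) |
      a * ((x 0 - Z 0) ^ 2 + (x 1 - Z 1) ^ 2) + l * (x 0 - Z 0) + m * (x 1 - Z 1) + e = 0 ∧
      b * ((x 0 - Z 0) ^ 2 + (x 1 - Z 1) ^ 2) + l' * (x 0 - Z 0) + m' * (x 1 - Z 1) + e' = 0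
      }.Finite := by
  set d := l * m' - l' * m with hdd
  set A := (m * b - m' * a) / d with hA
  set B := (m * e' - m' * e) / d with hB
  set C := (l' * a - l * b) / d with hC
  set D := (l' * e - l * e') / d with hD
  refine ((circ_finite A B C D).image
    (fun s => (!₂[A * s + B + Z 0, C * s + D + Z 1] : EuclideanSpace ℝ (Fin 2)))).subset ?_
  rintro x ⟨h1, h2⟩
  have hp : x 0 - Z 0 = A * ((x 0 - Z 0) ^ 2 + (x 1 - Z 1) ^ 2) + B := by
    rw [hA, hB]
    generalize x 0 - Z 0 = p at *
    generalize x 1 - Z 1 = q at *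
    field_simp
    rw [hdd]
    linear_combination m' * h1 - m * h2
  have hq : x 1 - Z 1 = C * ((x 0 - Z 0) ^ 2 + (x 1 - Z 1) ^ 2) + D := by
    rw [hC, hD]
    generalize x 0 - Z 0 = p at *
    generalize x 1 - Z 1 = q at *
    field_simp
    rw [hdd]
    linear_combination l * h2 - l' * h1
  refine ⟨(x 0 - Z 0) ^ 2 + (x 1 - Z 1) ^ 2, ?_, ?_⟩
  · simp only [mem_setOf_eq]
    rw [← hp, ← hq]
  · ext t
    fin_cases t
    · simp; linarith
    · simp; linarith

theorem det_ne (X Y Z : EuclideanSpace ℝ (Fin 2)) (hne : X ≠ Y)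
    (h : ¬ Collinear ℝ ({X, Y, Z} : Set (EuclideanSpace ℝ (Fin 2)))) :
    (Y 0 - X 0) * (Z 1 - X 1) - (Z 0 - X 0) * (Y 1 - X 1) ≠ 0 := by
  intro hd
  apply h
  rw [collinear_iff_of_mem (p₀ := X) (by simp)]
  refine ⟨Y - X, ?_⟩
  have key : ∃ r : ℝ, Z = r • (Y - X) +ᵥ X := by
    by_cases h0 : Y 0 - X 0 = 0
    · have h1 : Y 1 - X 1 ≠ 0 := by
        intro h1
        apply hne
        ext t
        fin_cases t
        · simp; linarith
        · simp; linarith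
      have hz : Z 0 - X 0 = 0 := by
        have : (Z 0 - X 0) * (Y 1 - X 1) = 0 := by rw [h0] at hd; linarith
        exact (mul_eq_zero.mp this).resolve_right h1
      refine ⟨(Z 1 - X 1) / (Y 1 - X 1), ?_⟩
      ext t
      fin_cases t
      · simp [h0]; linarith
      · simp; field_simp; ring
    · refine ⟨(Z 0 - X 0) / (Y 0 - X 0), ?_⟩
      ext t
      fin_cases t
      · simp; field_simp; ring
      · simp; field_simp; linarith
  intro p hp
  simp only [mem_insert_iff, mem_singleton_iff] at hp
  rcases hp with rfl | rfl | rfl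
  · exact ⟨0, by simp⟩
  · exact ⟨1, by simp⟩
  · exact key

/-- The near-field reflector generating function is generic (condition `Gen_Ω`) as soon
as no three target points are collinear: triple interfaces are `ℋ¹`-negligible. -/
theorem reflector_genericity
    (Ω : Set (EuclideanSpace ℝ (Fin 2))) (hΩo : IsOpen Ω) (hΩb : Bornology.IsBounded Ω)
    {N : ℕ} (y : Fin N → EuclideanSpace ℝ (Fin 2)) (hy : Function.Injective y)
    (hcol : ∀ i j k : Fin N, i ≠ j → i ≠ k → j ≠ k →
      ¬ Collinear ℝ ({y i, y j, y k} : Set (EuclideanSpace ℝ (Fin 2)))) :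
    ∀ ψ : Fin N → ℝ, (∀ i, 0 < ψ i) → ∀ i j k : Fin N, i ≠ j → i ≠ k → j ≠ k →
      μH[(1 : ℝ)]
        (({x ∈ Ω | 1 / (2 * ψ i) - ψ i / 2 * ‖x - y i‖ ^ 2 =
            1 / (2 * ψ j) - ψ j / 2 * ‖x - y j‖ ^ 2} : Set (EuclideanSpace ℝ (Fin 2))) ∩
         {x ∈ Ω | 1 / (2 * ψ i) - ψ i / 2 * ‖x - y i‖ ^ 2 =
            1 / (2 * ψ k) - ψ k / 2 * ‖x - y k‖ ^ 2}) = 0 := by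
  intro ψ hψ i j k hij hik hjk
  have hd := det_ne (y i) (y j) (y k) (fun h => hij (hy h)) (hcol i j k hij hik hjk)
  have hj := hψ j
  have hk := hψ k
  have := Measure.noAtoms_hausdorff (EuclideanSpace ℝ (Fin 2)) (d := 1) one_pos
  apply Set.Finite.measure_zero
  refine (pair_finite (y i)
    ((ψ j - ψ i) / 2) (-ψ j * (y j 0 - y i 0)) (-ψ j * (y j 1 - y i 1))
    (1 / (2 * ψ i) - 1 / (2 * ψ j) + ψ j / 2 * ((y j 0 - y i 0) ^ 2 + (y j 1 - y i 1) ^ 2))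
    ((ψ k - ψ i) / 2) (-ψ k * (y k 0 - y i 0)) (-ψ k * (y k 1 - y i 1))
    (1 / (2 * ψ i) - 1 / (2 * ψ k) + ψ k / 2 * ((y k 0 - y i 0) ^ 2 + (y k 1 - y i 1) ^ 2))
    ?_).subset ?_
  · intro h0
    apply mul_ne_zero (mul_ne_zero hj.ne' hk.ne') hd
    linear_combination h0
  · rintro x ⟨⟨-, h1⟩, ⟨-, h2⟩⟩
    simp only [EuclideanSpace.real_norm_sq_eq, Fin.sum_univ_two, PiLp.sub_apply] at h1 h2
    constructor
    · linear_combination h1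
    · linear_combination h2
end
end
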